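/- arXiv:2010.00498 — 12 statements merged into one kernel-verified Lean document; each statement's English description precedes it below -/
import Mathlib

section
/- There exist a function o : ℕ → ℕ with o(n) ≥ 7 for all n ≥ 1 and o(n) → ∞ as n → ∞, and two elements σ₁, σ₂ of the product group Ĝ = ∏_{n ≥ 1} Alt(o(n)) such that the subgroup H = ⟨σ₁, σ₂⟩ they generate satisfies: (a) H is dense in Ĝ for the product topology in which each factor Alt(o(n)) is discrete; (b) every H-orbit in X̂ = ∏_{n ≥ 1} Fin(o(n)) is dense, i.e. the coordinatewise action of H on X̂ is minimal; (c) for every x̂ ∈ X̂ and every n ≥ 0 the stabilizer subgroup K_n is finite, and card(K_n) → ∞ as n → ∞; (d) for every x̂ ∈ X̂ and every n ≥ 0 the centralizer subgroup Z_n is the trivial subgroup. (Hence the action of the 2-generated group H on the Cantor set X̂ is wild of finite type and algebraically stable with trivial centralizer direct limit group.) -/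
open Filter

/-- Discrete topology on the finite group of permutations of `Fin m`. -/
instance instPermFinTop (m : ℕ) : TopologicalSpace (Equiv.Perm (Fin m)) := ⊥

instance instPermFinDisc (m : ℕ) : DiscreteTopology (Equiv.Perm (Fin m)) := ⟨rfl⟩

/-- The Cantor set `X̂ = ∏_{n ≥ 1} Fin (o n)` (indexed here by all of `ℕ`,
the factor of index `n` corresponding to level `n+1` of the tree). -/
abbrev XB (o : ℕ → ℕ) : Type := ∀ n : ℕ, Fin (o n)

/-- The profinite product group `Ĝ = ∏_{n ≥ 1} Alt (o n)`. -/
abbrev GB (o : ℕ → ℕ) : Type := ∀ n : ℕ, alternatingGroup (Fin (o n))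

/-- The coordinatewise action of `Ĝ` on `X̂`. -/
def smulX (o : ℕ → ℕ) (g : GB o) (x : XB o) : XB o :=
  fun n => (g n : Equiv.Perm (Fin (o n))) (x n)

/-- The stabilizer subgroup `K_n`: elements of `Ĝ` acting as the identity on the
level-`n` cylinder `U_n` around `x`. -/
def KK (o : ℕ → ℕ) (x : XB o) (n : ℕ) : Set (GB o) :=
  {g | ∀ w : XB o, (∀ i, i < n → w i = x i) → smulX o g w = w}

/-- The setwise stabilizer `Û_n` of the level-`n` cylinder `U_n` around `x`. -/
def UU (o : ℕ → ℕ) (x : XB o) (n : ℕ) : Set (GB o) :=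
  {g | ∀ i, i < n → (g i : Equiv.Perm (Fin (o i))) (x i) = x i}

/-- The centralizer subgroup `Z_n`: elements fixing `x` and commuting with every
element of `Û_n`. -/
def ZZ (o : ℕ → ℕ) (x : XB o) (n : ℕ) : Set (GB o) :=
  {h | smulX o h x = x ∧ ∀ g ∈ UU o x n, h * g = g * h}

lemma gen_exists (p : ℕ) (hp : 7 ≤ p) (hpp : p.Prime) : ∃ c t : alternatingGroup (Fin p),
    (∀ x y : Fin p, ∃ k : ℤ, ((c : Equiv.Perm (Fin p)) ^ k) x = y) ∧ c ^ p = 1 ∧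
    ((c * (t * c⁻¹ * t⁻¹) : alternatingGroup (Fin p)) : Equiv.Perm (Fin p)).IsThreeCycle := by
  obtain ⟨m, rfl⟩ : ∃ m, p = m + 2 := ⟨p - 2, by omega⟩
  have hcyc : (finRotate (m + 2)).IsCycle := isCycle_finRotate
  have hsup : (finRotate (m + 2)).support = Finset.univ := support_finRotate
  have hodd : Odd (m + 2) := hpp.odd_of_ne_two (by omega)
  have heven : Even (m + 1) := by
    rcases hodd with ⟨k, hk⟩; exact ⟨k, by omega⟩
  have hs : finRotate (m + 2) ∈ alternatingGroup (Fin (m + 2)) := by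
    rw [Equiv.Perm.mem_alternatingGroup, sign_finRotate]
    exact heven.neg_one_pow
  let q : ℕ → Fin (m + 2) := fun i => Fin.ofNat (m + 2) i
  have hq : ∀ i, finRotate (m + 2) (q i) = q (i + 1) := by
    intro i
    rw [finRotate_apply]
    ext
    simp [q, Fin.val_add]
  have hne : ∀ i j, i < 4 → j < 4 → i ≠ j → q i ≠ q j := by
    intro i j hi hj hij h
    have := congrArg Fin.val h
    simp only [q, Fin.ofNat] at this
    rw [Nat.mod_eq_of_lt (by omega), Nat.mod_eq_of_lt (by omega)] at this
    exact hij this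
  have ht : Equiv.swap (q 1) (q 0) * Equiv.swap (q 1) (q 2) ∈ alternatingGroup (Fin (m + 2)) := by
    rw [Equiv.Perm.mem_alternatingGroup, Equiv.Perm.sign_mul, Equiv.Perm.sign_swap (hne _ _ (by omega) (by omega) (by omega)),
      Equiv.Perm.sign_swap (hne _ _ (by omega) (by omega) (by omega))]
    simp
  refine ⟨⟨_, hs⟩, ⟨_, ht⟩, ?_, ?_, ?_⟩
  · intro x y
    have hx : finRotate (m + 2) x ≠ x := by
      rw [← Equiv.Perm.mem_support, hsup]; simp
    have hy : finRotate (m + 2) y ≠ y := by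
      rw [← Equiv.Perm.mem_support, hsup]; simp
    exact hcyc.sameCycle hx hy
  · apply Subtype.ext
    have h1 : orderOf (finRotate (m + 2)) = m + 2 := by
      rw [hcyc.orderOf, hsup]; simp
    have h2 := pow_orderOf_eq_one (finRotate (m + 2))
    rw [h1] at h2
    exact h2
  · have key : finRotate (m + 2) * (Equiv.swap (q 1) (q 0) * Equiv.swap (q 1) (q 2) *
        (finRotate (m + 2))⁻¹ * (Equiv.swap (q 1) (q 0) * Equiv.swap (q 1) (q 2))⁻¹) =
        Equiv.swap (q 1) (q 3) * Equiv.swap (q 1) (q 0) := by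
      have e1 : ∀ i j, finRotate (m + 2) * Equiv.swap (q i) (q j) =
          Equiv.swap (q (i+1)) (q (j+1)) * finRotate (m + 2) := by
        intro i j
        rw [Equiv.mul_swap_eq_swap_mul, hq, hq]
      have e2 : Equiv.swap (q 2) (q 1) * Equiv.swap (q 2) (q 3) * Equiv.swap (q 1) (q 2) =
          Equiv.swap (q 1) (q 3) := by
        rw [Equiv.swap_comm (q 1) (q 2), Equiv.swap_comm (q 2) (q 3)]
        exact Equiv.swap_mul_swap_mul_swap (hne 3 2 (by omega) (by omega) (by omega))
          (hne 3 1 (by omega) (by omega) (by omega))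
      rw [mul_inv_rev, Equiv.swap_inv, Equiv.swap_inv, ← mul_assoc, ← mul_assoc, ← mul_assoc,
        ← mul_assoc, e1, mul_assoc _ (finRotate _), e1]
      simp only [zero_add, Nat.reduceAdd]
      rw [← mul_assoc, mul_inv_cancel_right, e2]
    have h3 := Equiv.Perm.isThreeCycle_swap_mul_swap_same (hne 1 3 (by omega) (by omega) (by omega))
      (hne 1 0 (by omega) (by omega) (by omega)) (hne 3 0 (by omega) (by omega) (by omega))
    rw [← key] at h3
    exact h3

lemma sub_top (p : ℕ) (hpp : p.Prime) (S : Subgroup (alternatingGroup (Fin p)))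
    (c d : alternatingGroup (Fin p)) (hc : c ∈ S) (hd : d ∈ S)
    (hc' : ∀ x y : Fin p, ∃ k : ℤ, ((c : Equiv.Perm (Fin p)) ^ k) x = y)
    (hd' : (d : Equiv.Perm (Fin p)).IsThreeCycle) (a : alternatingGroup (Fin p)) : a ∈ S := by
  let G : Subgroup (Equiv.Perm (Fin p)) := S.map (alternatingGroup (Fin p)).subtype
  have : MulAction.IsPretransitive G (Fin p) := by
    refine ⟨fun x y => ?_⟩
    obtain ⟨k, hk⟩ := hc' x y
    exact ⟨⟨(c : Equiv.Perm (Fin p)) ^ k, ⟨c ^ k, S.zpow_mem hc k, by simp⟩⟩, hk⟩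
  have hprim : MulAction.IsPreprimitive G (Fin p) :=
    MulAction.IsPreprimitive.of_prime_card (by simpa using hpp)
  have := Equiv.Perm.alternatingGroup_le_of_isPreprimitive_of_isThreeCycle_mem hprim hd'
    (⟨d, hd, rfl⟩ : (d : Equiv.Perm (Fin p)) ∈ G)
  obtain ⟨b, hb, hba⟩ := this a.2
  have : b = a := Subtype.ext hba
  exact this ▸ hb

lemma exists_three (m : ℕ) (hm : 7 ≤ m) (x y z : Fin m) (hzx : z ≠ x) (hzy : z ≠ y) :
    ∃ g : alternatingGroup (Fin m), (g : Equiv.Perm (Fin m)) x = x ∧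
      (g : Equiv.Perm (Fin m)) y = y ∧ (g : Equiv.Perm (Fin m)) z ≠ z := by
  have h1 : ∃ w, w ∉ ({x, y, z} : Finset (Fin m)) := by
    by_contra! h
    have := Finset.card_le_card (fun w _ => h w : Finset.univ ⊆ ({x, y, z} : Finset (Fin m)))
    have h3 := Finset.card_le_three (a := x) (b := y) (c := z)
    simp at this; omega
  obtain ⟨w, hw⟩ := h1
  have h2 : ∃ v, v ∉ ({w, x, y, z} : Finset (Fin m)) := by
    by_contra! h
    have := Finset.card_le_card (fun w' _ => h w' : Finset.univ ⊆ ({w, x, y, z} : Finset (Fin m)))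
    have h3 := Finset.card_le_four (a := w) (b := x) (c := y) (d := z)
    simp at this; omega
  obtain ⟨v, hv⟩ := h2
  simp only [Finset.mem_insert, Finset.mem_singleton, not_or] at hw hv
  obtain ⟨hwx, hwy, hwz⟩ := hw
  obtain ⟨hvw, hvx, hvy, hvz⟩ := hv
  refine ⟨⟨Equiv.swap z w * Equiv.swap z v, ?_⟩, ?_, ?_, ?_⟩
  · rw [Equiv.Perm.mem_alternatingGroup, Equiv.Perm.sign_mul, Equiv.Perm.sign_swap (Ne.symm hwz),
      Equiv.Perm.sign_swap (Ne.symm hvz)]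
    simp
  · simp only [Equiv.Perm.mul_apply]
    rw [Equiv.swap_apply_of_ne_of_ne (Ne.symm hzx) (Ne.symm hvx),
      Equiv.swap_apply_of_ne_of_ne (Ne.symm hzx) (Ne.symm hwx)]
  · simp only [Equiv.Perm.mul_apply]
    rw [Equiv.swap_apply_of_ne_of_ne (Ne.symm hzy) (Ne.symm hvy),
      Equiv.swap_apply_of_ne_of_ne (Ne.symm hzy) (Ne.symm hwy)]
  · simp only [Equiv.Perm.mul_apply]
    rw [Equiv.swap_apply_left, Equiv.swap_apply_of_ne_of_ne hvz hvw]
    exact hvz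

lemma ZZ_triv (o : ℕ → ℕ) (ho : ∀ n, 7 ≤ o n) (x : XB o) (n : ℕ) : ZZ o x n = {1} := by
  ext h
  simp only [Set.mem_singleton_iff]
  constructor
  · rintro ⟨hx, hc⟩
    funext i
    apply Subtype.ext
    ext1 y
    by_contra hy
    have hxi : (h i : Equiv.Perm (Fin (o i))) (x i) = x i := congrFun hx i
    have hy' : (h i : Equiv.Perm (Fin (o i))) y ≠ y := hy
    have hzx : (h i : Equiv.Perm (Fin (o i))) y ≠ x i := by
      intro h1
      have h2 : y = x i := (h i : Equiv.Perm (Fin (o i))).injective (h1.trans hxi.symm)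
      rw [h2] at hy'
      exact hy' hxi
    obtain ⟨g, g1, g2, g3⟩ := exists_three (o i) (ho i) (x i) y _ hzx hy'
    have hU : (Pi.mulSingle i g : GB o) ∈ UU o x n := by
      intro j _
      by_cases hj : j = i
      · subst hj; simpa using g1
      · simp [Pi.mulSingle_eq_of_ne hj]
    have h3 := congrFun (hc _ hU) i
    simp only [Pi.mul_apply, Pi.mulSingle_eq_same] at h3
    have h4 := congrArg (fun a : alternatingGroup (Fin (o i)) => (a : Equiv.Perm (Fin (o i))) y) h3
    simp only [Subgroup.coe_mul, Equiv.Perm.mul_apply, g2] at h4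
    exact g3 h4.symm
  · rintro rfl
    exact ⟨rfl, fun g _ => by simp⟩

lemma KK_eq_one (o : ℕ → ℕ) (x : XB o) (n : ℕ) (g : GB o) (hg : g ∈ KK o x n) (i : ℕ)
    (hi : n ≤ i) : g i = 1 := by
  apply Subtype.ext
  ext1 y
  have h1 := hg (Function.update x i y) (fun j hj => Function.update_of_ne (by omega) _ _)
  have h2 := congrFun h1 i
  simpa [smulX] using h2

lemma KK_finite (o : ℕ → ℕ) (x : XB o) (n : ℕ) : (KK o x n).Finite := by
  have : Finite (KK o x n) := by
    apply Finite.of_injective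
      (fun (g : KK o x n) => (fun i : Fin n => g.1 i : ∀ i : Fin n, alternatingGroup (Fin (o i))))
    intro g h hgh
    apply Subtype.ext
    funext i
    by_cases hi : i < n
    · exact congrFun hgh ⟨i, hi⟩
    · rw [KK_eq_one o x n g.1 g.2 i (by omega), KK_eq_one o x n h.1 h.2 i (by omega)]
  exact Set.toFinite _

lemma KK_card (o : ℕ → ℕ) (ho : ∀ n, 7 ≤ o n) (x : XB o) (n : ℕ) : n ≤ Nat.card (KK o x n) := by
  have hex : ∀ i, ∃ g : alternatingGroup (Fin (o i)), (g : Equiv.Perm (Fin (o i))) (x i) = x i ∧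
      g ≠ 1 := by
    intro i
    have : Nontrivial (Fin (o i)) := Fin.nontrivial_iff_two_le.2 (by have := ho i; omega)
    obtain ⟨z, hz⟩ := exists_ne (x i)
    obtain ⟨g, h1, _, h2⟩ := exists_three (o i) (ho i) (x i) (x i) z hz hz
    refine ⟨g, h1, ?_⟩
    rintro rfl
    exact h2 rfl
  choose g hg1 hg2 using hex
  have : Finite (KK o x n) := (KK_finite o x n).to_subtype
  have hmem : ∀ i : Fin n, (Pi.mulSingle (i : ℕ) (g i) : GB o) ∈ KK o x n := by
    intro i w hw
    funext j
    by_cases hj : j = i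
    · subst hj
      simp only [smulX, Pi.mulSingle_eq_same, hw i i.2, hg1]
    · simp [smulX, Pi.mulSingle_eq_of_ne hj]
  have := Nat.card_le_card_of_injective (fun i : Fin n => (⟨_, hmem i⟩ : KK o x n)) (by
    intro i j hij
    by_contra hne
    have h1 := congrFun (congrArg Subtype.val hij) i
    simp only [Pi.mulSingle_eq_same] at h1
    rw [Pi.mulSingle_eq_of_ne (fun h => hne (Fin.ext h))] at h1
    exact hg2 _ h1)
  simpa using this

lemma approx (o : ℕ → ℕ) (hp : ∀ n, (o n).Prime) (hinj : Function.Injective o) (c t : GB o)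
    (hc : ∀ n, ∀ x y : Fin (o n), ∃ k : ℤ, ((c n : Equiv.Perm (Fin (o n))) ^ k) x = y)
    (hc1 : ∀ n, c n ^ o n = 1)
    (ht : ∀ n, ((c n * (t n * (c n)⁻¹ * (t n)⁻¹) : alternatingGroup (Fin (o n))) :
      Equiv.Perm (Fin (o n))).IsThreeCycle) (I : Finset ℕ) (g : GB o) :
    ∃ h ∈ Subgroup.closure {c, t}, ∀ k ∈ I, h k = g k := by
  have hcH : c ∈ Subgroup.closure {c, t} := Subgroup.subset_closure (by simp)
  have htH : t ∈ Subgroup.closure {c, t} := Subgroup.subset_closure (by simp)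
  have conc : ∀ n, ∀ a : alternatingGroup (Fin (o n)), ∃ h ∈ Subgroup.closure {c, t},
      h n = a ∧ ∀ k ∈ I, k ≠ n → h k = 1 := by
    intro n
    let S : Subgroup (alternatingGroup (Fin (o n))) :=
      { carrier := {a | ∃ h ∈ Subgroup.closure {c, t}, h n = a ∧ ∀ k ∈ I, k ≠ n → h k = 1}
        one_mem' := ⟨1, one_mem _, rfl, fun _ _ _ => rfl⟩
        mul_mem' := by
          rintro a b ⟨h, hh, rfl, h1⟩ ⟨h', hh', rfl, h1'⟩
          exact ⟨h * h', mul_mem hh hh', rfl, fun k hk hkn => by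
            rw [Pi.mul_apply, h1 k hk hkn, h1' k hk hkn, one_mul]⟩
        inv_mem' := by
          rintro a ⟨h, hh, rfl, h1⟩
          exact ⟨h⁻¹, inv_mem hh, rfl, fun k hk hkn => by
            rw [Pi.inv_apply, h1 k hk hkn, inv_one]⟩ }
    have hcop : Nat.Coprime (∏ k ∈ I.erase n, o k) (o n) := by
      apply Nat.Coprime.prod_left
      intro k hk
      exact (Nat.coprime_primes (hp k) (hp n)).2 (fun h => (Finset.ne_of_mem_erase hk) (hinj h))
    obtain ⟨m, -, hm⟩ := Nat.exists_mul_mod_eq_one_of_coprime hcop (hp n).one_lt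
    have hce : ∀ k, ∀ e, e % o k = 1 → c k ^ e = c k := by
      intro k e he
      rw [← Nat.mod_add_div e (o k), he, pow_add, pow_mul, hc1, one_pow, pow_one, mul_one]
    have hce1 : ∀ k ∈ I, k ≠ n → c k ^ ((∏ k ∈ I.erase n, o k) * m) = 1 := by
      intro k hk hkn
      obtain ⟨r, hr⟩ := Finset.dvd_prod_of_mem o (Finset.mem_erase.2 ⟨hkn, hk⟩)
      rw [hr, mul_assoc, pow_mul, hc1, one_pow]
    generalize (∏ k ∈ I.erase n, o k) * m = e at hm hce1
    have hcS : c n ∈ S := ⟨c ^ e, pow_mem hcH _, hce n e hm, hce1⟩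
    have hdS : c n * (t n * (c n)⁻¹ * (t n)⁻¹) ∈ S := by
      refine ⟨c ^ e * (t * (c ^ e)⁻¹ * t⁻¹), mul_mem (pow_mem hcH _)
        (mul_mem (mul_mem htH (inv_mem (pow_mem hcH _))) (inv_mem htH)), ?_, ?_⟩
      · simp only [Pi.mul_apply, Pi.inv_apply, Pi.pow_apply, hce n e hm]
      · intro k hk hkn
        simp [hce1 k hk hkn]
    exact fun a => sub_top (o n) (hp n) S _ _ hcS hdS (hc n) (ht n) a
  have : ∀ J : Finset ℕ, ∃ h ∈ Subgroup.closure {c, t}, ∀ k ∈ I, h k = if k ∈ J then g k else 1 := by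
    intro J
    induction J using Finset.induction_on with
    | empty => exact ⟨1, one_mem _, by simp⟩
    | insert n J hn ih =>
      obtain ⟨h, hh, h1⟩ := ih
      obtain ⟨h', hh', h2, h3⟩ := conc n (g n)
      refine ⟨h * h', mul_mem hh hh', fun k hk => ?_⟩
      rw [Pi.mul_apply, h1 k hk]
      by_cases hkn : k = n
      · subst hkn; simp [hn, h2]
      · simp [h3 k hk hkn, hkn]
  obtain ⟨h, hh, h1⟩ := this I
  exact ⟨h, hh, fun k hk => by rw [h1 k hk, if_pos hk]⟩

lemma dense_of_approx {A : ℕ → Type*} [∀ n, TopologicalSpace (A n)] (s : Set (∀ n, A n))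
    (h : ∀ (I : Finset ℕ) (g : ∀ n, A n), ∃ f ∈ s, ∀ k ∈ I, f k = g k) : Dense s := by
  rw [dense_iff_inter_open]
  rintro U hU ⟨g, hg⟩
  obtain ⟨I, u, hu, hsub⟩ := isOpen_pi_iff.1 hU g hg
  obtain ⟨f, hf, hfg⟩ := h I g
  refine ⟨f, hsub ?_, hf⟩
  intro k hk
  rw [hfg k hk]
  exact (hu k hk).2

/-- There is a function `o` with `o n ≥ 7` for all `n` and `o n → ∞`, and two
elements `σ₁, σ₂` of `Ĝ = ∏ Alt (o n)` generating a subgroup `H` which is dense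
in `Ĝ`, whose coordinatewise action on `X̂ = ∏ Fin (o n)` is minimal, and whose
stabilizer subgroups `K_n` are finite with `card K_n → ∞`, while all centralizer
subgroups `Z_n` are trivial: the action is wild of finite type and
algebraically stable with trivial centralizer direct limit group. -/
theorem stmt0 :
    ∃ o : ℕ → ℕ, (∀ n, 7 ≤ o n) ∧ Tendsto o atTop atTop ∧
      ∃ σ₁ σ₂ : GB o,
        -- (a) `H = ⟨σ₁, σ₂⟩` is dense in `Ĝ` for the product topology
        Dense ((Subgroup.closure {σ₁, σ₂} : Subgroup (GB o)) : Set (GB o)) ∧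
        -- (b) every `H`-orbit in `X̂` is dense, i.e. the action is minimal
        (∀ x : XB o,
          Dense {y : XB o | ∃ h ∈ (Subgroup.closure {σ₁, σ₂} : Subgroup (GB o)),
            smulX o h x = y}) ∧
        -- (c) each `K_n` is finite and `card K_n → ∞`
        (∀ x : XB o, ∀ n : ℕ, (KK o x n).Finite) ∧
        (∀ x : XB o, Tendsto (fun n => Nat.card ↥(KK o x n)) atTop atTop) ∧
        -- (d) each `Z_n` is trivial
        (∀ x : XB o, ∀ n : ℕ, ZZ o x n = {1}) := by
  have hinf := Nat.infinite_setOfPred_prime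
  have hmono : StrictMono (Nat.nth Nat.Prime) := Nat.nth_strictMono hinf
  let o : ℕ → ℕ := fun n => Nat.nth Nat.Prime (n + 7)
  have hole : ∀ n, n + 7 ≤ o n := fun n => hmono.le_apply
  have ho : ∀ n, 7 ≤ o n := fun n => by have := hole n; omega
  have hp : ∀ n, (o n).Prime := fun n => Nat.prime_nth_prime _
  have hinj : Function.Injective o := fun a b h => by
    have := hmono.injective h
    omega
  choose c t hc hc1 ht using fun n => gen_exists (o n) (ho n) (hp n)
  have key := approx o hp hinj c t hc hc1 ht
  refine ⟨o, ho, tendsto_atTop_mono (fun n => (Nat.le_add_right n 7).trans (hole n)) tendsto_id, c, t,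
    dense_of_approx _ key, ?_, KK_finite o, fun x => tendsto_atTop_mono (KK_card o ho x) tendsto_id,
    ZZ_triv o ho⟩
  intro x
  apply dense_of_approx
  intro I y
  choose k hk using fun n => hc n (x n) (y n)
  obtain ⟨h, hh, h1⟩ := key I (fun n => c n ^ k n)
  refine ⟨_, ⟨h, hh, rfl⟩, fun n hn => ?_⟩
  simp only [smulX, h1 n hn, Subgroup.coe_zpow]
  exact hk n
end

section
/- For every n ≥ 0, K_n is a proper subgroup of K_{n+1}; for every n ≥ 1, K_n is an infinite group; and for every n ≥ 0, Z_n is the trivial subgroup {id}. (Hence the chain (K_n) is unbounded while the chain (Z_n) is bounded and trivial: any minimal action of a countably generated dense subgroup of the infinite wreath product A^∞ on X̂ is dynamically wild and algebraically stable with trivial centralizer direct limit group.) -/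
/-- `f` is a portrait map over the family of permutation groups `(A n)`:
there is a family assigning to every `n` and every length-`n` word `v` an
element `a_v ∈ A n` (the group of level `n+1`) such that the `n`-th coordinate
of `f x` is `a_{(x_0, …, x_{n-1})} (x n)`.  (Indices are shifted by one with
respect to the paper: the factor of index `n` is level `n+1` of the tree.) -/
def IsPortrait (X : ℕ → Type) (A : ∀ n, Subgroup (Equiv.Perm (X n)))
    (f : Equiv.Perm (∀ n, X n)) : Prop :=
  ∃ a : ∀ n : ℕ, ((i : Fin n) → X i.1) → A n,
    ∀ (x : ∀ n, X n) (n : ℕ),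
      f x n = (a n (fun i => x i.1) : Equiv.Perm (X n)) (x n)

/-- The level-`n` cylinder `U_n` around the point `x̂`. -/
def cylU (X : ℕ → Type) (x : ∀ n, X n) (n : ℕ) : Set (∀ n, X n) :=
  {w | ∀ i, i < n → w i = x i}

/-- The discriminant group `D`: portrait maps fixing the point `x̂`. -/
def discD (X : ℕ → Type) (A : ∀ n, Subgroup (Equiv.Perm (X n))) (x : ∀ n, X n) :
    Set (Equiv.Perm (∀ n, X n)) :=
  {g | IsPortrait X A g ∧ g x = x}

/-- The stabilizer subgroup `K_n`: portrait maps fixing the cylinder `U_n`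
pointwise. -/
def stabK (X : ℕ → Type) (A : ∀ n, Subgroup (Equiv.Perm (X n))) (x : ∀ n, X n) (n : ℕ) :
    Set (Equiv.Perm (∀ n, X n)) :=
  {g | IsPortrait X A g ∧ ∀ w ∈ cylU X x n, g w = w}

/-- The setwise stabilizer `Û_n`: portrait maps preserving the cylinder `U_n`
setwise. -/
def setstabU (X : ℕ → Type) (A : ∀ n, Subgroup (Equiv.Perm (X n))) (x : ∀ n, X n) (n : ℕ) :
    Set (Equiv.Perm (∀ n, X n)) :=
  {g | IsPortrait X A g ∧ g '' cylU X x n = cylU X x n}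

/-- The centralizer subgroup `Z_n`: portrait maps fixing `x̂` and commuting with
every element of `Û_n`. -/
def centZ (X : ℕ → Type) (A : ∀ n, Subgroup (Equiv.Perm (X n))) (x : ∀ n, X n) (n : ℕ) :
    Set (Equiv.Perm (∀ n, X n)) :=
  {h | IsPortrait X A h ∧ h x = x ∧ ∀ g ∈ setstabU X A x n, h * g = g * h}

/-- The elementary rotation at the vertex `w|_M`. -/
noncomputable def rotM (X : ℕ → Type) (w : ∀ n, X n) (M : ℕ) (a : Equiv.Perm (X M)) :
    (∀ n, X n) → (∀ n, X n) := by
  classical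
  exact fun z => if z ∈ cylU X w M then Function.update z M (a (z M)) else z

theorem update_mem_cylU (X : ℕ → Type) (w z : ∀ n, X n) (M : ℕ) (b : X M) :
    Function.update z M b ∈ cylU X w M ↔ z ∈ cylU X w M := by
  unfold cylU
  simp only [Set.mem_setOf_eq]
  refine forall_congr' fun i => forall_congr' fun hi => ?_
  rw [Function.update_of_ne (by omega)]

theorem rotM_rotM (X : ℕ → Type) (w : ∀ n, X n) (M : ℕ) (a b : Equiv.Perm (X M))
    (hab : ∀ y, b (a y) = y) (z : ∀ n, X n) : rotM X w M b (rotM X w M a z) = z := by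
  by_cases h : z ∈ cylU X w M
  · simp [rotM, h, update_mem_cylU, hab]
  · simp [rotM, h]

theorem exists_rot (X : ℕ → Type) [∀ n, Finite (X n)]
    (hcard : ∀ n, 2 ≤ Nat.card (X n))
    (A : ∀ n, Subgroup (Equiv.Perm (X n)))
    (htrans : ∀ n, ∀ y z : X n, ∃ a ∈ A n, a y = z)
    (w : ∀ n, X n) (M : ℕ) :
    ∃ g : Equiv.Perm (∀ n, X n), IsPortrait X A g ∧ (∀ z, z ∉ cylU X w M → g z = z) ∧
      (∀ z i, i ≠ M → g z i = z i) ∧ g w M ≠ w M := by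
  classical
  have : Nontrivial (X M) := Finite.one_lt_card_iff_nontrivial.mp (hcard M)
  obtain ⟨y, hy⟩ := exists_ne (w M)
  obtain ⟨a, haA, ha⟩ := htrans M (w M) y
  refine ⟨⟨rotM X w M a, rotM X w M a⁻¹, rotM_rotM X w M a a⁻¹ (by simp),
    rotM_rotM X w M a⁻¹ a (by simp)⟩, ?_, ?_, ?_, ?_⟩
  · refine ⟨fun n v => if h : n = M ∧ ∀ i : Fin n, v i = w i.1 then
      ⟨h.1 ▸ a, by obtain ⟨rfl, _⟩ := h; exact haA⟩ else 1, fun z n => ?_⟩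
    simp only [Equiv.coe_fn_mk]
    by_cases hn : n = M
    · subst hn
      by_cases hz : z ∈ cylU X w n
      · have h2 : ∀ i : Fin n, z i.1 = w i.1 := fun i => hz i.1 i.2
        simp [rotM, hz, h2]
      · have h2 : ¬ ∀ i : Fin n, z i.1 = w i.1 := fun h => hz fun i hi => h ⟨i, hi⟩
        simp [rotM, hz, h2]
    · by_cases hz : z ∈ cylU X w M <;> simp [rotM, hz, hn]
  · intro z hz
    simp [rotM, hz]
  · intro z i hi
    by_cases hz : z ∈ cylU X w M <;> simp [rotM, hz, hi]
  · have : w ∈ cylU X w M := fun _ _ => rfl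
    simp [rotM, this, ha, hy]

/-- For a minimal action of the infinite wreath product `A^∞` (realized as the
group of portrait maps over a family of transitive groups `A n` on finite sets
`X n` with at least `2` elements) on the boundary `X̂` of the tree: every `K_n`
is a proper subgroup of `K_{n+1}`, every `K_n` with `n ≥ 1` is infinite, and
every `Z_n` is trivial.  Hence the chain `(K_n)` is unbounded and the chain
`(Z_n)` is bounded and trivial: the action is dynamically wild and
algebraically stable with trivial centralizer direct limit group. -/
theorem stmt1 (X : ℕ → Type) [∀ n, Finite (X n)]
    (hcard : ∀ n, 2 ≤ Nat.card (X n))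
    (A : ∀ n, Subgroup (Equiv.Perm (X n)))
    (htrans : ∀ n, ∀ y z : X n, ∃ a ∈ A n, a y = z)
    (x : ∀ n, X n) :
    (∀ n : ℕ, stabK X A x n ⊂ stabK X A x (n + 1)) ∧
    (∀ n : ℕ, 1 ≤ n → (stabK X A x n).Infinite) ∧
    (∀ n : ℕ, centZ X A x n = {1}) := by
  have hnt : ∀ n, ∃ y : X n, y ≠ x n := fun n => by
    have : Nontrivial (X n) := Finite.one_lt_card_iff_nontrivial.mp (hcard n)
    exact exists_ne (x n)
  refine ⟨fun n => ⟨?_, ?_⟩, fun n hn => ?_, fun n => ?_⟩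
  · rintro g ⟨hg, hgw⟩
    exact ⟨hg, fun w hw => hgw w fun i hi => hw i (by omega)⟩
  · intro hsub
    obtain ⟨y, hy⟩ := hnt n
    obtain ⟨g, hg, hfix, -, hmv⟩ := exists_rot X hcard A htrans (Function.update x n y) (n + 1)
    have hK : g ∈ stabK X A x (n + 1) := by
      refine ⟨hg, fun w hw => hfix w fun hw' => hy ?_⟩
      have h1 := hw n (by omega)
      have h2 := hw' n (by omega)
      rw [Function.update_self] at h2
      rw [← h2, h1]
    refine hmv (congrFun ((hsub hK).2 _ fun i hi => ?_) _)
    rw [Function.update_of_ne (by omega)]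
  · obtain ⟨y, hy⟩ := hnt 0
    choose g hg hfix hoth hmv using
      fun m => exists_rot X hcard A htrans (Function.update x 0 y) (m + 1)
    refine Set.infinite_of_injective_forall_mem (f := g) ?_ ?_
    · intro m k hmk
      by_contra hne
      refine hmv m ?_
      rw [hmk]
      exact hoth k _ _ (by omega)
    · intro m
      refine ⟨hg m, fun w hw => hfix m w fun hw' => hy ?_⟩
      have h1 := hw 0 (by omega)
      have h2 := hw' 0 (by omega)
      rw [Function.update_self] at h2
      rw [← h2, h1]
  · ext h
    rw [Set.mem_singleton_iff]
    constructor
    · rintro ⟨-, -, hc⟩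
      by_contra hne
      obtain ⟨w, hw⟩ : ∃ w, h w ≠ w := by
        by_contra! hall
        exact hne (Equiv.ext hall)
      obtain ⟨m, hm⟩ := Function.ne_iff.mp hw
      obtain ⟨g, hg, hfix, hoth, hmv⟩ := exists_rot X hcard A htrans w (max n (m + 1))
      have hgU : ∀ z, g z ∈ cylU X x n ↔ z ∈ cylU X x n := fun z =>
        forall_congr' fun i => forall_congr' fun hi => by rw [hoth z i (by omega)]
      have hgS : g ∈ setstabU X A x n := by
        refine ⟨hg, Set.ext fun z => ⟨?_, fun hz => ⟨g.symm z, ?_, by simp⟩⟩⟩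
        · rintro ⟨z', hz', rfl⟩
          exact (hgU z').2 hz'
        · rw [← hgU]
          simpa using hz
      have h1 : h (g w) = g (h w) := DFunLike.congr_fun (hc g hgS) w
      rw [hfix (h w) fun hin => hm (hin m (by omega))] at h1
      exact hmv (congrFun (h.injective h1) _)
    · rintro rfl
      exact ⟨⟨fun _ _ => 1, fun _ _ => rfl⟩, rfl, fun g _ => by simp⟩
end

section
/- Assume: (i) for every n, K_n(Ĥ) = Z_n(Ĥ); (ii) for every n there is m > n with K_n(Ĥ) a proper subgroup of K_m(Ĥ); (iii) Z_n(Ĝ) = {1} for every n; (iv) K_n(Ĝ) ≠ {1} for every n ≥ 1; (v) for every n there is m > n with K_n(Ĝ) a proper subgroup of K_m(Ĝ). Then for the product action: for every n there is m > n with K_n a proper subgroup of K_m, for every n there is m > n with Z_n a proper subgroup of Z_m (so both chains (K_n) and (Z_n) are unbounded), and for every n ≥ 1, Z_n is a proper subgroup of K_n. (Hence the product action is dynamically wild and algebraically wild.) -/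
/-- The stabilizer subgroup `K_n(Γ)`: elements of `Γ` fixing the subset `W`
pointwise. -/
def fixSet {Z : Type*} (Γ : Set (Equiv.Perm Z)) (W : Set Z) : Set (Equiv.Perm Z) :=
  {g | g ∈ Γ ∧ ∀ w ∈ W, g w = w}

/-- The setwise stabilizer `Ŵ(Γ)` of a subset `W`. -/
def setStab {Z : Type*} (Γ : Set (Equiv.Perm Z)) (W : Set Z) : Set (Equiv.Perm Z) :=
  {g | g ∈ Γ ∧ g '' W = W}

/-- The centralizer subgroup `Z_n(Γ)`: elements of `Γ` fixing the base point `z`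
and commuting with every element of the setwise stabilizer of `W`. -/
def centSet {Z : Type*} (Γ : Set (Equiv.Perm Z)) (z : Z) (W : Set Z) : Set (Equiv.Perm Z) :=
  {h | h ∈ Γ ∧ h z = z ∧ ∀ g ∈ setStab Γ W, h * g = g * h}

/-- The product group `Ĥ × Ĝ`, realized as the permutations of `X × Y` acting
coordinatewise with coordinates in `Ĥ` and `Ĝ`. -/
def prodGrp {X Y : Type*} (Hh : Subgroup (Equiv.Perm X)) (Gh : Subgroup (Equiv.Perm Y)) :
    Set (Equiv.Perm (X × Y)) :=
  {c | ∃ a ∈ Hh, ∃ b ∈ Gh, c = Equiv.prodCongr a b}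

theorem aux_inj {X Y : Type*} (x : X) (y : Y) {a a' : Equiv.Perm X} {b b' : Equiv.Perm Y}
    (h : Equiv.prodCongr a b = Equiv.prodCongr a' b') : a = a' ∧ b = b' := by
  constructor
  · ext u
    have := congrArg (fun e : Equiv.Perm (X × Y) => (e (u, y)).1) h
    simpa using this
  · ext v
    have := congrArg (fun e : Equiv.Perm (X × Y) => (e (x, v)).2) h
    simpa using this

theorem aux_mul {X Y : Type*} (a a' : Equiv.Perm X) (b b' : Equiv.Perm Y) :
    (Equiv.prodCongr a b : Equiv.Perm (X × Y)) * Equiv.prodCongr a' b'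
      = Equiv.prodCongr (a * a') (b * b') := by
  ext p <;> rfl

def auxProd {X Y : Type*} (A : Set (Equiv.Perm X)) (B : Set (Equiv.Perm Y)) :
    Set (Equiv.Perm (X × Y)) :=
  {c | ∃ a ∈ A, ∃ b ∈ B, c = Equiv.prodCongr a b}

theorem aux_fix {X Y : Type*} (Hh : Subgroup (Equiv.Perm X)) (Gh : Subgroup (Equiv.Perm Y))
    (x : X) (y : Y) (U : Set X) (V : Set Y) (hx : x ∈ U) (hy : y ∈ V) :
    fixSet (prodGrp Hh Gh) (U ×ˢ V) =
      auxProd (fixSet (Hh : Set (Equiv.Perm X)) U) (fixSet (Gh : Set (Equiv.Perm Y)) V) := by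
  ext c
  constructor
  · rintro ⟨⟨a, ha, b, hb, rfl⟩, h⟩
    refine ⟨a, ⟨ha, fun u hu => ?_⟩, b, ⟨hb, fun v hv => ?_⟩, rfl⟩
    · exact congrArg Prod.fst (h (u, y) ⟨hu, hy⟩)
    · exact congrArg Prod.snd (h (x, v) ⟨hx, hv⟩)
  · rintro ⟨a, ⟨ha, ha'⟩, b, ⟨hb, hb'⟩, rfl⟩
    refine ⟨⟨a, ha, b, hb, rfl⟩, ?_⟩
    rintro ⟨u, v⟩ ⟨hu, hv⟩
    exact Prod.ext (ha' u hu) (hb' v hv)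

theorem aux_image {X Y : Type*} (a : Equiv.Perm X) (b : Equiv.Perm Y) (U : Set X) (V : Set Y) :
    (Equiv.prodCongr a b) '' (U ×ˢ V) = (a '' U) ×ˢ (b '' V) :=
  (Set.prod_image_image_eq (m₁ := a) (m₂ := b) (s := U) (t := V)).symm

theorem aux_cent {X Y : Type*} (Hh : Subgroup (Equiv.Perm X)) (Gh : Subgroup (Equiv.Perm Y))
    (x : X) (y : Y) (U : Set X) (V : Set Y) (hx : x ∈ U) (hy : y ∈ V) :
    centSet (prodGrp Hh Gh) (x, y) (U ×ˢ V) =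
      auxProd (centSet (Hh : Set (Equiv.Perm X)) x U)
        (centSet (Gh : Set (Equiv.Perm Y)) y V) := by
  ext c
  constructor
  · rintro ⟨⟨a, ha, b, hb, rfl⟩, h, hc⟩
    refine ⟨a, ⟨ha, congrArg Prod.fst h, fun g hg => ?_⟩,
      b, ⟨hb, congrArg Prod.snd h, fun g hg => ?_⟩, rfl⟩
    · have := hc (Equiv.prodCongr g 1) ⟨⟨g, hg.1, 1, Gh.one_mem, rfl⟩, by
        rw [aux_image, hg.2]; simp⟩
      rw [aux_mul, aux_mul] at this
      exact (aux_inj x y this).1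
    · have := hc (Equiv.prodCongr 1 g) ⟨⟨1, Hh.one_mem, g, hg.1, rfl⟩, by
        rw [aux_image, hg.2]; simp⟩
      rw [aux_mul, aux_mul] at this
      exact (aux_inj x y this).2
  · rintro ⟨a, ⟨ha, ha', ha''⟩, b, ⟨hb, hb', hb''⟩, rfl⟩
    refine ⟨⟨a, ha, b, hb, rfl⟩, Prod.ext ha' hb', ?_⟩
    rintro _ ⟨⟨g, hg, k, hk, rfl⟩, h⟩
    rw [aux_image] at h
    have hne : ((g '' U) ×ˢ (k '' V)).Nonempty :=
      ⟨(g x, k y), ⟨x, hx, rfl⟩, ⟨y, hy, rfl⟩⟩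
    obtain ⟨h1, h2⟩ := (Set.prod_eq_prod_iff_of_nonempty hne).1 h
    rw [aux_mul, aux_mul, ha'' g ⟨hg, h1⟩, hb'' k ⟨hk, h2⟩]

theorem aux_mono {X Y : Type*} {A A' : Set (Equiv.Perm X)} {B B' : Set (Equiv.Perm Y)}
    (hA : A ⊆ A') (hB : B ⊆ B') : auxProd A B ⊆ auxProd A' B' := by
  rintro _ ⟨a, ha, b, hb, rfl⟩
  exact ⟨a, hA ha, b, hB hb, rfl⟩

theorem aux_left {X Y : Type*} (x : X) (y : Y) {A A' : Set (Equiv.Perm X)}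
    {B B' : Set (Equiv.Perm Y)}
    (hA : A ⊂ A') (hB : B ⊆ B') (h1 : 1 ∈ B') : auxProd A B ⊂ auxProd A' B' := by
  refine ⟨aux_mono hA.1 hB, fun h => hA.2 fun a ha => ?_⟩
  obtain ⟨a', ha', b', _, e⟩ := h ⟨a, ha, 1, h1, rfl⟩
  rw [(aux_inj x y e).1]; exact ha'

theorem aux_right {X Y : Type*} (x : X) (y : Y) {A A' : Set (Equiv.Perm X)}
    {B B' : Set (Equiv.Perm Y)}
    (hA : A ⊆ A') (hB : B ⊂ B') (h1 : 1 ∈ A') : auxProd A B ⊂ auxProd A' B' := by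
  refine ⟨aux_mono hA hB.1, fun h => hB.2 fun b hb => ?_⟩
  obtain ⟨a', _, b', hb', e⟩ := h ⟨1, h1, b, hb, rfl⟩
  rw [(aux_inj x y e).2]; exact hb'

/-- If the action of `Ĥ` on `X` (with base point `x` and decreasing subsets `U_n`)
is wild of flat type (`K_n(Ĥ) = Z_n(Ĥ)` with unbounded chain `(K_n(Ĥ))`), and the
action of `Ĝ` on `Y` (with base point `y` and subsets `V_n`) is dynamically wild
with trivial centralizers (`Z_n(Ĝ)` trivial, `K_n(Ĝ)` nontrivial and unbounded),
then for the product action of `Ĥ × Ĝ` on `X × Y` both chains `(K_n)` and `(Z_n)`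
are unbounded, and `Z_n` is a proper subgroup of `K_n` for all `n ≥ 1`: the
product action is dynamically wild and algebraically wild. -/
theorem stmt2 {X Y : Type*}
    (Hh : Subgroup (Equiv.Perm X)) (Gh : Subgroup (Equiv.Perm Y))
    (x : X) (y : Y) (U : ℕ → Set X) (V : ℕ → Set Y)
    (hUdec : ∀ n, U (n + 1) ⊆ U n) (hxU : ∀ n, x ∈ U n)
    (hVdec : ∀ n, V (n + 1) ⊆ V n) (hyV : ∀ n, y ∈ V n)
    -- elements of `Ĥ` preserving `U_{n+1}` setwise also preserve `U_n` setwise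
    (hHdesc : ∀ n, ∀ g : Equiv.Perm X, g ∈ Hh →
      g '' U (n + 1) = U (n + 1) → g '' U n = U n)
    -- the setwise stabilizer of `U_n` in `Ĥ` acts transitively on `U_n`
    (hHtrans : ∀ n, ∀ u ∈ U n, ∃ g : Equiv.Perm X, g ∈ Hh ∧ g '' U n = U n ∧ g x = u)
    (hGdesc : ∀ n, ∀ g : Equiv.Perm Y, g ∈ Gh →
      g '' V (n + 1) = V (n + 1) → g '' V n = V n)
    (hGtrans : ∀ n, ∀ v ∈ V n, ∃ g : Equiv.Perm Y, g ∈ Gh ∧ g '' V n = V n ∧ g y = v)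
    -- (i) the action of `Ĥ` is of flat type: `K_n(Ĥ) = Z_n(Ĥ)`
    (hflat : ∀ n, fixSet (Hh : Set (Equiv.Perm X)) (U n)
      = centSet (Hh : Set (Equiv.Perm X)) x (U n))
    -- (ii) the chain `(K_n(Ĥ))` is unbounded
    (hHwild : ∀ n, ∃ m, n < m ∧ fixSet (Hh : Set (Equiv.Perm X)) (U n)
      ⊂ fixSet (Hh : Set (Equiv.Perm X)) (U m))
    -- (iii) the centralizers of the `Ĝ`-action are trivial
    (hGcent : ∀ n, centSet (Gh : Set (Equiv.Perm Y)) y (V n) = {1})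
    -- (iv) the stabilizers of the `Ĝ`-action are nontrivial
    (hGstab : ∀ n, 1 ≤ n → fixSet (Gh : Set (Equiv.Perm Y)) (V n) ≠ {1})
    -- (v) the chain `(K_n(Ĝ))` is unbounded
    (hGwild : ∀ n, ∃ m, n < m ∧ fixSet (Gh : Set (Equiv.Perm Y)) (V n)
      ⊂ fixSet (Gh : Set (Equiv.Perm Y)) (V m)) :
    (∀ n, ∃ m, n < m ∧ fixSet (prodGrp Hh Gh) (U n ×ˢ V n)
      ⊂ fixSet (prodGrp Hh Gh) (U m ×ˢ V m)) ∧
    (∀ n, ∃ m, n < m ∧ centSet (prodGrp Hh Gh) (x, y) (U n ×ˢ V n)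
      ⊂ centSet (prodGrp Hh Gh) (x, y) (U m ×ˢ V m)) ∧
    (∀ n, 1 ≤ n → centSet (prodGrp Hh Gh) (x, y) (U n ×ˢ V n)
      ⊂ fixSet (prodGrp Hh Gh) (U n ×ˢ V n)) := by
  have hV : Antitone V := antitone_nat_of_succ_le hVdec
  have one_fix : ∀ {Z : Type _} (Γ : Subgroup (Equiv.Perm Z)) (W : Set Z),
      (1 : Equiv.Perm Z) ∈ fixSet (Γ : Set (Equiv.Perm Z)) W :=
    fun Γ W => ⟨Γ.one_mem, fun _ _ => rfl⟩
  have one_fixG : ∀ n, (1 : Equiv.Perm Y) ∈ fixSet (Gh : Set (Equiv.Perm Y)) (V n) :=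
    fun n => ⟨Gh.one_mem, fun _ _ => rfl⟩
  refine ⟨fun n => ?_, fun n => ?_, fun n hn => ?_⟩
  · obtain ⟨m, hm, h⟩ := hHwild n
    refine ⟨m, hm, ?_⟩
    rw [aux_fix Hh Gh x y _ _ (hxU n) (hyV n), aux_fix Hh Gh x y _ _ (hxU m) (hyV m)]
    exact aux_left x y h (fun g hg => ⟨hg.1, fun w hw => hg.2 w (hV hm.le hw)⟩) (one_fixG m)
  · obtain ⟨m, hm, h⟩ := hHwild n
    refine ⟨m, hm, ?_⟩
    rw [aux_cent Hh Gh x y _ _ (hxU n) (hyV n), aux_cent Hh Gh x y _ _ (hxU m) (hyV m),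
      ← hflat, ← hflat, hGcent, hGcent]
    exact aux_left x y h subset_rfl rfl
  · rw [aux_cent Hh Gh x y _ _ (hxU n) (hyV n), aux_fix Hh Gh x y _ _ (hxU n) (hyV n),
      ← hflat, hGcent]
    refine aux_right x y subset_rfl ?_ (one_fix Hh _)
    exact (Set.singleton_subset_iff.2 (one_fixG n)).ssubset_of_ne (hGstab n hn).symm
end

section
/- Let (X'_k)_{k ≥ 1} be finite sets with |X'_k| ≥ 2 for all k, let X̂' = ∏_{k ≥ 1} X'_k with the product topology (each factor discrete), and suppose φ : X̂ → X̂' is a homeomorphism such that for every h ∈ H the conjugate φ ∘ h ∘ φ⁻¹ : X̂' → X̂' is induced by a rooted tree automorphism, i.e., for every k ≥ 1 and all x, y ∈ X̂', if x_i = y_i for all 1 ≤ i ≤ k then (φ∘h∘φ⁻¹)(x)_i = (φ∘h∘φ⁻¹)(y)_i for all 1 ≤ i ≤ k. Then limsup_k |X'_k| = ∞; that is, for every M and every N there exists k > N with |X'_k| > M. -/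
open Filter

theorem aux_order {X' : ℕ → Type} [∀ k, Fintype (X' k)] {G : Type*} [Group G]
    (T : G → (∀ k, X' k) → (∀ k, X' k)) (h1 : ∀ x, T 1 x = x)
    (hmul : ∀ g h x, T (g * h) x = T g (T h x)) (H : Subgroup G)
    (hl : ∀ h ∈ H, ∀ k : ℕ, ∀ x y : (∀ k, X' k), (∀ i, i < k → x i = y i) →
        ∀ i, i < k → T h x i = T h y i) (B : ℕ) (hB : ∀ k, Fintype.card (X' k) ≤ B)
    (h : G) (hh : h ∈ H) (k : ℕ) :
    ∀ x, ∀ i, i < k → T (h ^ (B.factorial ^ k)) x i = x i := by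
  classical
  induction k with
  | zero => intro x i hi; omega
  | succ k ih =>
    intro x
    obtain ⟨g, hg⟩ : ∃ g, g = h ^ (B.factorial ^ k) := ⟨_, rfl⟩
    rw [← hg] at ih
    have hgH : g ∈ H := hg ▸ H.pow_mem hh _
    rw [pow_succ, pow_mul, ← hg]
    have hinj : Function.Injective (fun a : X' k => T g (Function.update x k a) k) := by
      intro a b hab
      have key : ∀ i, i < k + 1 → T g (Function.update x k a) i = T g (Function.update x k b) i := by
        intro i hi
        rcases Nat.lt_succ_iff_lt_or_eq.mp hi with hi | rfl
        · rw [ih _ i hi, ih _ i hi, Function.update_of_ne hi.ne, Function.update_of_ne hi.ne]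
        · exact hab
      have := hl g⁻¹ (H.inv_mem hgH) (k + 1) _ _ key k (Nat.lt_succ_self k)
      rw [← hmul, ← hmul, inv_mul_cancel, h1, h1] at this
      simpa using this
    let e : Equiv.Perm (X' k) := Equiv.ofBijective _ (Finite.injective_iff_bijective.mp hinj)
    have he : ∀ a, e a = T g (Function.update x k a) k := fun a => rfl
    have hj : ∀ j : ℕ, ∀ i, i < k + 1 →
        T (g ^ j) x i = Function.update x k ((e ^ j) (x k)) i := by
      intro j
      induction j with
      | zero => intro i _; simp [h1]
      | succ j ihj =>
        intro i hi
        rw [pow_succ' g, hmul, hl g hgH (k + 1) _ _ ihj i hi]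
        rcases Nat.lt_succ_iff_lt_or_eq.mp hi with hi | rfl
        · rw [ih _ i hi, Function.update_of_ne hi.ne, Function.update_of_ne hi.ne]
        · rw [Function.update_self, pow_succ', Equiv.Perm.mul_apply, he]
    have hone : e ^ B.factorial = 1 := by
      apply orderOf_dvd_iff_pow_eq_one.mp
      refine orderOf_dvd_card.trans ?_
      rw [Fintype.card_perm]
      exact Nat.factorial_dvd_factorial (hB k)
    intro i hi
    rw [hj _ i hi, hone]
    simp

/-- If `φ : X̂ → X̂'` is a homeomorphism onto the boundary `X̂' = ∏_k X'_k` of another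
spherically homogeneous rooted tree (all `X'_k` finite with at least `2` elements)
which conjugates every `h ∈ H = ⟨σ₁, σ₂⟩` to a map induced by a rooted tree
automorphism of `X̂'` (i.e. preserving agreement of the first `k` coordinates for
every `k`), then `limsup_k |X'_k| = ∞`: for all `M` and `N` there is `k > N` with
`|X'_k| > M`. -/
theorem stmt5 (o : ℕ → ℕ) (p : Fin 2 × ℕ → ℕ)
    (hpinj : Function.Injective p)
    (hpodd : ∀ q, Odd (p q)) (hpprime : ∀ q, Nat.Prime (p q))
    (hple : ∀ (i : Fin 2) (n : ℕ), p (i, n) ≤ o n)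
    (hsum : ∀ n : ℕ, o n < p (0, n) + p (1, n))
    (σ : Fin 2 → GB o)
    (horder : ∀ (i : Fin 2) (n : ℕ), orderOf (σ i n) = p (i, n))
    (hgen : ∀ n : ℕ,
      Subgroup.closure {(σ 0 n : Equiv.Perm (Fin (o n))), (σ 1 n : Equiv.Perm (Fin (o n)))}
        = alternatingGroup (Fin (o n)))
    (X' : ℕ → Type) [∀ k, Fintype (X' k)]
    [∀ k, TopologicalSpace (X' k)] [∀ k, DiscreteTopology (X' k)]
    (hcard : ∀ k, 2 ≤ Fintype.card (X' k))
    (φ : XB o ≃ₜ (∀ k, X' k))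
    (hlevel : ∀ h ∈ (Subgroup.closure {σ 0, σ 1} : Subgroup (GB o)),
      ∀ k : ℕ, ∀ x y : (∀ k, X' k), (∀ i, i < k → x i = y i) →
        ∀ i, i < k → φ (smulX o h (φ.symm x)) i = φ (smulX o h (φ.symm y)) i) :
    ∀ M N : ℕ, ∃ k, N < k ∧ M < Fintype.card (X' k) := by
  by_contra hcon
  push Not at hcon
  obtain ⟨M, N, hMN⟩ := hcon
  obtain ⟨B, hBdef⟩ : ∃ B, B = M + ∑ i ∈ Finset.range (N + 1), Fintype.card (X' i) := ⟨_, rfl⟩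
  have hB : ∀ k, Fintype.card (X' k) ≤ B := by
    intro k
    by_cases hk : N < k
    · have := hMN k hk
      omega
    · have := Finset.single_le_sum (f := fun i => Fintype.card (X' i)) (s := Finset.range (N + 1))
        (fun i _ => Nat.zero_le _) (Finset.mem_range.mpr (show k < N + 1 by omega))
      omega
  obtain ⟨n, hn⟩ : ∃ n, B < p (0, n) := by
    by_contra hc
    push Not at hc
    have hi : Function.Injective (fun n : ℕ => p (0, n)) := by
      intro a b hab
      simpa using hpinj hab
    exact Set.infinite_range_of_injective hi
      ((Set.finite_Iic B).subset (by rintro _ ⟨n, rfl⟩; exact hc n))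
  let T : GB o → (∀ k, X' k) → (∀ k, X' k) := fun h x => φ (smulX o h (φ.symm x))
  have hord := aux_order T (fun x => φ.apply_symm_apply x) (fun g h x => by
    simp only [T, Homeomorph.symm_apply_apply]; rfl) (Subgroup.closure {σ 0, σ 1}) hlevel B hB
    (σ 0) (Subgroup.subset_closure (by simp))
  have key : ∀ a : Fin (o n), ∃ k, ((σ 0 n : Equiv.Perm (Fin (o n))) ^ (B.factorial ^ k)) a = a := by
    intro a
    have hne : ∀ k, Nonempty (X' k) := fun k =>
      Fintype.card_pos_iff.mp (by have := hcard k; omega)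
    obtain ⟨y⟩ : Nonempty (∀ k, X' k) := inferInstance
    let x : XB o := Function.update (φ.symm y) n a
    have ht : Tendsto (fun k => T (σ 0 ^ (B.factorial ^ k)) (φ x)) atTop (nhds (φ x)) := by
      rw [tendsto_pi_nhds]
      intro i
      apply tendsto_const_nhds.congr'
      filter_upwards [eventually_gt_atTop i] with k hk
      exact (hord k (φ x) i hk).symm
    have ht2 := (φ.symm.continuous.tendsto _).comp ht
    rw [tendsto_pi_nhds] at ht2
    have ht3 := ht2 n
    rw [nhds_discrete, tendsto_pure] at ht3
    obtain ⟨k, hk⟩ := ht3.exists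
    refine ⟨k, ?_⟩
    simpa [T, smulX, x] using hk
  have hone : (σ 0 n : Equiv.Perm (Fin (o n))) = 1 := by
    ext1 a
    obtain ⟨k, hk⟩ := key a
    have hcop : Nat.Coprime (orderOf (σ 0 n : Equiv.Perm (Fin (o n)))) (B.factorial ^ k) := by
      rw [Subgroup.orderOf_coe, horder]
      apply Nat.Coprime.pow_right
      rw [(hpprime _).coprime_iff_not_dvd, (hpprime _).dvd_factorial]
      omega
    obtain ⟨m, hm⟩ := exists_pow_eq_self_of_coprime hcop.symm
    have hfix : ∀ j : ℕ,
        (((σ 0 n : Equiv.Perm (Fin (o n))) ^ (B.factorial ^ k)) ^ j) a = a := by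
      intro j
      induction j with
      | zero => simp
      | succ j ih => rw [pow_succ, Equiv.Perm.mul_apply, hk, ih]
    have := hfix m
    rw [hm] at this
    simpa using this
  have h2 := horder 0 n
  rw [← Subgroup.orderOf_coe, hone, orderOf_one] at h2
  exact (hpprime (0, n)).one_lt.ne h2
end

section
/- For every n ≥ 1, the image of the group H under the projection homomorphism Ĝ = ∏_{i ≥ 1} Alt(o(i)) → ∏_{i=1}^{n} Alt(o(i)) onto the first n coordinates is the entire finite group ∏_{i=1}^{n} Alt(o(i)). -/
open Filter

/-- The projection of `Ĝ = ∏_{i} Alt (o i)` onto its first `n` coordinates. -/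
def projGB (o : ℕ → ℕ) (n : ℕ) : GB o →* ∀ i : Fin n, alternatingGroup (Fin (o i.1)) where
  toFun g := fun i => g i.1
  map_one' := rfl
  map_mul' _ _ := rfl

/-- For every `n`, the image of `H = ⟨σ₁, σ₂⟩` under the projection of
`Ĝ = ∏_i Alt (o i)` onto the first `n` coordinates is the whole finite group
`∏_{i < n} Alt (o i)`. -/
theorem stmt6 (o : ℕ → ℕ) (p : Fin 2 × ℕ → ℕ)
    (hpinj : Function.Injective p)
    (hpodd : ∀ q, Odd (p q)) (hpprime : ∀ q, Nat.Prime (p q))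
    (hple : ∀ (i : Fin 2) (n : ℕ), p (i, n) ≤ o n)
    (hsum : ∀ n : ℕ, o n < p (0, n) + p (1, n))
    (σ : Fin 2 → GB o)
    (horder : ∀ (i : Fin 2) (n : ℕ), orderOf (σ i n) = p (i, n))
    (hgen : ∀ n : ℕ,
      Subgroup.closure {(σ 0 n : Equiv.Perm (Fin (o n))), (σ 1 n : Equiv.Perm (Fin (o n)))}
        = alternatingGroup (Fin (o n)))
    (n : ℕ) :
    Subgroup.map (projGB o n) (Subgroup.closure {σ 0, σ 1}) = ⊤ := by
  classical
  set K := Subgroup.map (projGB o n) (Subgroup.closure {σ 0, σ 1}) with hK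
  have hmem : ∀ j : Fin 2, projGB o n (σ j) ∈ K := by
    intro j
    apply Subgroup.mem_map_of_mem
    apply Subgroup.subset_closure
    fin_cases j <;> simp
  have hsingle : ∀ (j : Fin 2) (i : Fin n),
      (Pi.mulSingle i (σ j i.1) : ∀ i : Fin n, alternatingGroup (Fin (o i.1))) ∈ K := by
    intro j i
    have hcop : Nat.Coprime (∏ l ∈ Finset.univ.erase i, p (j, l.1)) (p (j, i.1)) := by
      apply Nat.Coprime.prod_left
      intro l hl
      rw [Nat.coprime_primes (hpprime _) (hpprime _)]
      intro h
      have h2 := hpinj h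
      simp only [Prod.mk.injEq, true_and] at h2
      exact (Finset.ne_of_mem_erase hl) (Fin.ext h2)
    obtain ⟨m, hm⟩ := Nat.exists_mul_mod_eq_one_of_coprime hcop (hpprime _).one_lt
    have hpow := K.pow_mem (hmem j) ((∏ l ∈ Finset.univ.erase i, p (j, l.1)) * m)
    convert hpow using 1
    funext l
    have hval : (projGB o n (σ j) ^ ((∏ l ∈ Finset.univ.erase i, p (j, l.1)) * m)) l
      = (σ j l.1) ^ ((∏ l ∈ Finset.univ.erase i, p (j, l.1)) * m) := rfl
    rw [hval]
    by_cases hl : l = i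
    · subst hl
      rw [Pi.mulSingle_eq_same, ← pow_mod_orderOf, horder, hm.2, pow_one]
    · rw [Pi.mulSingle_eq_of_ne hl, eq_comm, ← orderOf_dvd_iff_pow_eq_one, horder]
      exact Dvd.dvd.mul_right
        (Finset.dvd_prod_of_mem (fun l : Fin n => p (j, l.1)) (by simp [hl])) m
  have htop : ∀ i : ℕ, Subgroup.closure {σ 0 i, σ 1 i} = ⊤ := by
    intro i
    apply Subgroup.map_injective (alternatingGroup (Fin (o i))).subtype_injective
    rw [MonoidHom.map_closure, Set.image_pair, ← MonoidHom.range_eq_map, Subgroup.range_subtype]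
    exact hgen i
  rw [eq_top_iff]
  intro x _
  apply Subgroup.pi_mem_of_mulSingle_mem
  intro i
  have hle : (⊤ : Subgroup (alternatingGroup (Fin (o i.1)))) ≤ K.comap
      (MonoidHom.mulSingle (fun i : Fin n => alternatingGroup (Fin (o i.1))) i) := by
    rw [← htop, Subgroup.closure_le]
    rintro y (rfl | rfl)
    · exact hsingle 0 i
    · exact hsingle 1 i
  exact hle (Subgroup.mem_top (x i))
end

section
/- Every H-orbit in X̂ = ∏_{n ≥ 1} Fin(o(n)) is dense in the product topology; that is, the coordinatewise action of the 2-generated group H on the Cantor set X̂ is minimal. -/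
open Filter

theorem aux_trans (m : ℕ) (hm : 3 ≤ m) (a b : Fin m) :
    ∃ g ∈ alternatingGroup (Fin m), g a = b := by
  by_cases hab : a = b
  · exact ⟨1, one_mem _, by simp [hab]⟩
  · obtain ⟨z, hz⟩ : ∃ z : Fin m, z ∉ ({a, b} : Finset (Fin m)) := by
      by_contra! hcon
      have h1 : (Finset.univ : Finset (Fin m)) ⊆ {a, b} := fun z _ => hcon z
      have h2 := Finset.card_le_card h1
      have h3 : ({a, b} : Finset (Fin m)).card ≤ 2 := Finset.card_le_two
      simp at h2
      omega
    simp only [Finset.mem_insert, Finset.mem_singleton, not_or] at hz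
    refine ⟨Equiv.swap a b * Equiv.swap b z, ?_, ?_⟩
    · rw [Equiv.Perm.mem_alternatingGroup, map_mul, Equiv.Perm.sign_swap hab,
        Equiv.Perm.sign_swap (fun h => hz.2 h.symm)]
      simp
    · rw [Equiv.Perm.mul_apply, Equiv.swap_apply_of_ne_of_ne hab (fun h => hz.1 h.symm),
        Equiv.swap_apply_left]

theorem aux_gen (o : ℕ → ℕ) (p : Fin 2 × ℕ → ℕ)
    (hpinj : Function.Injective p) (hpprime : ∀ q, Nat.Prime (p q))
    (σ : Fin 2 → GB o)
    (horder : ∀ (i : Fin 2) (n : ℕ), orderOf (σ i n) = p (i, n))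
    (N n : ℕ) (i : Fin 2) :
    ∃ h ∈ (Subgroup.closure {σ 0, σ 1} : Subgroup (GB o)),
      h n = σ i n ∧ ∀ m, m < N → m ≠ n → h m = 1 := by
  have hco : Nat.Coprime (p (i, n)) (∏ m ∈ (Finset.range N).erase n, p (i, m)) := by
    refine Nat.Coprime.prod_right fun m hm => ?_
    rw [Nat.coprime_primes (hpprime _) (hpprime _)]
    intro h
    have := hpinj h
    simp only [Prod.mk.injEq, true_and] at this
    exact (Finset.mem_erase.1 hm).1 this.symm
  obtain ⟨e, he1, he0⟩ := Nat.chineseRemainder hco 1 0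
  refine ⟨σ i ^ e, Subgroup.pow_mem _ (Subgroup.subset_closure ?_) e, ?_, ?_⟩
  · fin_cases i <;> simp
  · rw [← horder] at he1
    simpa using pow_eq_pow_iff_modEq.2 he1
  · intro m hm hmn
    rw [Pi.pow_apply, ← orderOf_dvd_iff_pow_eq_one, horder]
    exact (Finset.dvd_prod_of_mem (fun m => p (i, m))
      (Finset.mem_erase.2 ⟨hmn, Finset.mem_range.2 hm⟩)).trans ((Nat.modEq_zero_iff_dvd).1 he0)

theorem aux_single (o : ℕ → ℕ) (p : Fin 2 × ℕ → ℕ)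
    (hpinj : Function.Injective p) (hpprime : ∀ q, Nat.Prime (p q))
    (σ : Fin 2 → GB o)
    (horder : ∀ (i : Fin 2) (n : ℕ), orderOf (σ i n) = p (i, n))
    (N n : ℕ) (g : Equiv.Perm (Fin (o n)))
    (hg : g ∈ Subgroup.closure
      {(σ 0 n : Equiv.Perm (Fin (o n))), (σ 1 n : Equiv.Perm (Fin (o n)))}) :
    ∃ h ∈ (Subgroup.closure {σ 0, σ 1} : Subgroup (GB o)),
      (h n : Equiv.Perm (Fin (o n))) = g ∧ ∀ m, m < N → m ≠ n → h m = 1 := by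
  induction hg using Subgroup.closure_induction with
  | mem g hg =>
    rcases hg with rfl | rfl
    · obtain ⟨h, hh, h1, h2⟩ := aux_gen o p hpinj hpprime σ horder N n 0
      exact ⟨h, hh, by rw [h1], h2⟩
    · obtain ⟨h, hh, h1, h2⟩ := aux_gen o p hpinj hpprime σ horder N n 1
      exact ⟨h, hh, by rw [h1], h2⟩
  | one => exact ⟨1, one_mem _, by simp, by simp⟩
  | mul a b _ _ iha ihb =>
    obtain ⟨h, hh, h1, h2⟩ := iha
    obtain ⟨k, hk, k1, k2⟩ := ihb
    exact ⟨h * k, mul_mem hh hk, by simp [h1, k1], fun m hm hn => by simp [h2 m hm hn, k2 m hm hn]⟩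
  | inv a _ iha =>
    obtain ⟨h, hh, h1, h2⟩ := iha
    exact ⟨h⁻¹, inv_mem hh, by simp [h1], fun m hm hn => by simp [h2 m hm hn]⟩

/-- Every orbit of the subgroup `H = ⟨σ₁, σ₂⟩` acting coordinatewise on the Cantor set
`X̂ = ∏_n Fin (o n)` is dense in the product topology: the action of the
`2`-generated group `H` on `X̂` is minimal. -/
theorem stmt7 (o : ℕ → ℕ) (p : Fin 2 × ℕ → ℕ)
    (hpinj : Function.Injective p)
    (hpodd : ∀ q, Odd (p q)) (hpprime : ∀ q, Nat.Prime (p q))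
    (hple : ∀ (i : Fin 2) (n : ℕ), p (i, n) ≤ o n)
    (hsum : ∀ n : ℕ, o n < p (0, n) + p (1, n))
    (σ : Fin 2 → GB o)
    (horder : ∀ (i : Fin 2) (n : ℕ), orderOf (σ i n) = p (i, n))
    (hgen : ∀ n : ℕ,
      Subgroup.closure {(σ 0 n : Equiv.Perm (Fin (o n))), (σ 1 n : Equiv.Perm (Fin (o n)))}
        = alternatingGroup (Fin (o n)))
    (x : XB o) :
    Dense {y : XB o | ∃ h ∈ (Subgroup.closure {σ 0, σ 1} : Subgroup (GB o)),
      smulX o h x = y} := by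
  have key : ∀ (y : XB o) (N k : ℕ), k ≤ N →
      ∃ h ∈ (Subgroup.closure {σ 0, σ 1} : Subgroup (GB o)),
        (∀ m, m < k → (h m : Equiv.Perm (Fin (o m))) (x m) = y m) ∧
        ∀ m, m < N → k ≤ m → h m = 1 := by
    intro y N k
    induction k with
    | zero => exact fun _ => ⟨1, one_mem _, by simp, by simp⟩
    | succ k ih =>
      intro hk
      obtain ⟨h, hh, h1, h2⟩ := ih (by omega)
      have h3 : 3 ≤ o k := by
        have h4 := (hpprime (0, k)).two_le
        obtain ⟨r, hr⟩ := hpodd (0, k)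
        have h5 := hple 0 k
        omega
      obtain ⟨g, hg, hgx⟩ := aux_trans (o k) h3 (x k) (y k)
      rw [← hgen k] at hg
      obtain ⟨t, ht, t1, t2⟩ := aux_single o p hpinj hpprime σ horder N k g hg
      refine ⟨t * h, mul_mem ht hh, fun m hm => ?_, fun m hm hkm => ?_⟩
      · by_cases hmk : m = k
        · subst hmk
          simp [t1, h2 m (by omega) le_rfl, hgx]
        · simp [t2 m (by omega) hmk, h1 m (by omega)]
      · simp [t2 m hm (by omega), h2 m hm (by omega)]
  intro y
  rw [mem_closure_iff_nhds]
  intro U hU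
  rw [nhds_pi, Filter.mem_pi] at hU
  obtain ⟨I, hI, t, ht, htU⟩ := hU
  obtain ⟨b, hb⟩ := hI.bddAbove
  obtain ⟨h, hh, h1, -⟩ := key y (b + 1) (b + 1) le_rfl
  refine ⟨smulX o h x, htU fun m hm => ?_, h, hh, rfl⟩
  have h2 : smulX o h x m = y m := h1 m (Nat.lt_succ_of_le (hb hm))
  rw [h2]
  exact mem_of_mem_nhds (ht m)
end

section
/- The subgroup H is dense in Ĝ = ∏_{n ≥ 1} Alt(o(n)) with respect to the product topology in which each finite factor Alt(o(n)) carries the discrete topology. -/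
open Filter

/-- The subgroup `H = ⟨σ₁, σ₂⟩` of `Ĝ = ∏_{n} Alt (o n)`, where the `σ_i` are built
from an injective family `p` of odd primes with `p (i, n) ≤ o n < p (0, n) + p (1, n)`,
the coordinate `σ_i n` has order `p (i, n)`, and `σ₁ n, σ₂ n` generate `Alt (o n)`,
is dense in `Ĝ` for the product topology (each factor discrete). -/
theorem stmt8 (o : ℕ → ℕ) (p : Fin 2 × ℕ → ℕ)
    (hpinj : Function.Injective p)
    (hpodd : ∀ q, Odd (p q)) (hpprime : ∀ q, Nat.Prime (p q))
    (hple : ∀ (i : Fin 2) (n : ℕ), p (i, n) ≤ o n)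
    (hsum : ∀ n : ℕ, o n < p (0, n) + p (1, n))
    (σ : Fin 2 → GB o)
    (horder : ∀ (i : Fin 2) (n : ℕ), orderOf (σ i n) = p (i, n))
    (hgen : ∀ n : ℕ,
      Subgroup.closure {(σ 0 n : Equiv.Perm (Fin (o n))), (σ 1 n : Equiv.Perm (Fin (o n)))}
        = alternatingGroup (Fin (o n))) :
    Dense ((Subgroup.closure {σ 0, σ 1} : Subgroup (GB o)) : Set (GB o)) := by
  classical
  -- every finite projection of `H` is onto
  have key : ∀ F : Finset ℕ, ∀ g : GB o, ∃ h ∈ Subgroup.closure {σ 0, σ 1},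
      ∀ n ∈ F, h n = g n := by
    intro F g
    let r : GB o →* (∀ n : F, alternatingGroup (Fin (o n))) :=
      { toFun := fun g n => g n, map_one' := rfl, map_mul' := fun _ _ => rfl }
    set J := (Subgroup.closure {σ 0, σ 1}).map r with hJ
    have hσ : ∀ i, σ i ∈ Subgroup.closure {σ 0, σ 1} := by
      intro i
      apply Subgroup.subset_closure
      fin_cases i <;> simp
    have hsingle : ∀ (m : F) (i : Fin 2),
        MonoidHom.mulSingle (fun n : F => alternatingGroup (Fin (o n))) m (σ i m) ∈ J := by
      intro m i
      have hcop : Nat.Coprime (p (i, m)) (∏ n ∈ F.erase m, p (i, n)) := by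
        apply Nat.Coprime.prod_right
        intro n hn
        rw [Nat.coprime_primes (hpprime _) (hpprime _)]
        intro h
        have := hpinj h
        simp only [Prod.mk.injEq, true_and] at this
        exact (Finset.mem_erase.1 hn).1 this.symm
      obtain ⟨k, hk1, hk0⟩ := Nat.chineseRemainder hcop 1 0
      refine ⟨σ i ^ k, Subgroup.pow_mem _ (hσ i) k, ?_⟩
      funext n
      change (σ i n) ^ k = _
      by_cases hnm : n = m
      · subst hnm
        rw [MonoidHom.mulSingle_apply, Pi.mulSingle_eq_same]
        conv_rhs => rw [← pow_one (σ i n)]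
        rw [pow_eq_pow_iff_modEq, horder]
        exact hk1
      · rw [MonoidHom.mulSingle_apply, Pi.mulSingle_eq_of_ne hnm]
        apply orderOf_dvd_iff_pow_eq_one.1
        rw [horder]
        refine dvd_trans (Finset.dvd_prod_of_mem (fun n => p (i, n)) ?_)
          ((Nat.modEq_zero_iff_dvd).1 hk0)
        exact Finset.mem_erase.2 ⟨fun h => hnm (Subtype.ext h), n.2⟩
    have hgen' : ∀ n, Subgroup.closure {σ 0 n, σ 1 n} = ⊤ := by
      intro n
      apply Subgroup.map_injective (alternatingGroup (Fin (o n))).subtype_injective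
      rw [MonoidHom.map_closure, ← MonoidHom.range_eq_map, Subgroup.range_subtype,
        Set.image_pair]
      exact hgen n
    have hle : Subgroup.pi Set.univ
        (fun n : F => (⊤ : Subgroup (alternatingGroup (Fin (o n))))) ≤ J := by
      rw [Subgroup.pi_le_iff]
      intro m
      rw [Subgroup.map_le_iff_le_comap, ← hgen' m, Subgroup.closure_le]
      rintro x (rfl | rfl)
      · exact hsingle m 0
      · exact hsingle m 1
    obtain ⟨h, hh, e⟩ := hle (x := r g) (by simp [Subgroup.mem_pi])
    exact ⟨h, hh, fun n hn => congrFun e ⟨n, hn⟩⟩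
  rw [dense_iff_inter_open]
  rintro U hU ⟨g, hg⟩
  obtain ⟨F, u, hu, hsub⟩ := isOpen_pi_iff.1 hU g hg
  obtain ⟨h, hh, e⟩ := key F g
  refine ⟨h, hsub ?_, hh⟩
  intro n hn
  rw [e n hn]
  exact (hu n hn).2
end

section
/- Let α be a finite type with at least 5 elements, let x ∈ α, and let g be an element of the alternating group Alt(α) such that g ≠ 1 and g(x) = x. Then there exists τ ∈ Alt(α) with τ(x) = x and g ∘ τ ≠ τ ∘ g. -/
/-- If `α` is a finite type with at least `5` elements, `x ∈ α`, and `g` is a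
non-identity element of the alternating group on `α` fixing `x`, then there is
`τ` in the alternating group fixing `x` which does not commute with `g`. -/
theorem stmt9 (α : Type*) [Fintype α] [DecidableEq α] (hcard : 5 ≤ Fintype.card α)
    (x : α) (g : alternatingGroup α) (hg : g ≠ 1)
    (hgx : (g : Equiv.Perm α) x = x) :
    ∃ τ : alternatingGroup α, (τ : Equiv.Perm α) x = x ∧ g * τ ≠ τ * g := by
  have h1 : ∃ a, (g : Equiv.Perm α) a ≠ a := by
    by_contra! h
    exact hg (Subtype.ext (Equiv.ext h))
  obtain ⟨a, ha⟩ := h1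
  have hax : a ≠ x := by
    rintro rfl
    exact ha hgx
  have hbx : (g : Equiv.Perm α) a ≠ x := by
    intro h
    exact hax ((g : Equiv.Perm α).injective (h.trans hgx.symm))
  generalize hb : (g : Equiv.Perm α) a = b at ha hbx
  have h2 : 1 < (Finset.univ \ ({x, a, b} : Finset α)).card := by
    have h3 : ({x, a, b} : Finset α).card ≤ 3 := Finset.card_le_three
    have h4 := Finset.le_card_sdiff ({x, a, b} : Finset α) Finset.univ
    rw [Finset.card_univ] at h4
    omega
  obtain ⟨c, hc, d, hd, hcd⟩ := Finset.one_lt_card.mp h2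
  simp only [Finset.mem_sdiff, Finset.mem_univ, true_and, Finset.mem_insert,
    Finset.mem_singleton, not_or] at hc hd
  obtain ⟨hcx, hca, hcb⟩ := hc
  obtain ⟨hdx, hda, hdb⟩ := hd
  refine ⟨⟨Equiv.swap b c * Equiv.swap b d, ?_⟩, ?_, ?_⟩
  · rw [Equiv.Perm.mem_alternatingGroup, map_mul, Equiv.Perm.sign_swap (Ne.symm hcb),
      Equiv.Perm.sign_swap (Ne.symm hdb)]
    simp
  · simp only [Equiv.Perm.mul_apply]
    rw [Equiv.swap_apply_of_ne_of_ne hbx.symm (Ne.symm hdx),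
      Equiv.swap_apply_of_ne_of_ne hbx.symm (Ne.symm hcx)]
  · intro h
    have h5 := congrArg (fun k : alternatingGroup α => (k : Equiv.Perm α) a) h
    simp only [Subgroup.coe_mul, Equiv.Perm.mul_apply] at h5
    rw [Equiv.swap_apply_of_ne_of_ne ha.symm (Ne.symm hda),
      Equiv.swap_apply_of_ne_of_ne ha.symm (Ne.symm hca), hb, Equiv.swap_apply_left,
      Equiv.swap_apply_of_ne_of_ne hdb hcd.symm] at h5
    exact hdb h5.symm
end

section
/- For every n ≥ 1, the map K_n → S_0 × S_1 × ⋯ × S_{n-1} sending g to the tuple of its restrictions (g|X̂_0, g|X̂_1, …, g|X̂_{n-1}) is a group isomorphism; in particular K_n ≅ ∏_{i=0}^{n-1} S_i. -/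
/-- The difference `X̂_n = U_n \ U_{n+1}` of consecutive cylinders around `x̂`. -/
def ringX (X : ℕ → Type) (x : ∀ n, X n) (n : ℕ) : Set (∀ n, X n) :=
  cylU X x n \ cylU X x (n + 1)

/-- The group `S_n`: permutations of `X̂_n = U_n \ U_{n+1}` obtained as the
restrictions to `X̂_n` of the elements of the discriminant group `D`. -/
def resS (X : ℕ → Type) (A : ∀ n, Subgroup (Equiv.Perm (X n))) (x : ∀ n, X n) (n : ℕ) :
    Set (Equiv.Perm ↥(ringX X x n)) :=
  {e | ∃ g ∈ discD X A x, ∀ w : ↥(ringX X x n), (e w).1 = g w.1}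

open Classical in
/-- Extend a finite word by the tail of the base point. -/
noncomputable def extW (X : ℕ → Type) (x : ∀ n, X n) (m : ℕ) (v : (i : Fin m) → X i.1) :
    ∀ n, X n :=
  fun k => if h : k < m then v ⟨k, h⟩ else x k

theorem extW_lt {X : ℕ → Type} {x : ∀ n, X n} {m : ℕ} (w : ∀ n, X n) {k : ℕ} (h : k < m) :
    extW X x m (fun i => w i.1) k = w k := by
  simp [extW, h]

theorem extW_ge {X : ℕ → Type} {x : ∀ n, X n} {m : ℕ} (w : ∀ n, X n) {k : ℕ} (h : ¬ k < m) :
    extW X x m (fun i => w i.1) k = x k := by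
  simp [extW, h]

theorem portrait_mul {X : ℕ → Type} {A : ∀ n, Subgroup (Equiv.Perm (X n))} (x : ∀ n, X n)
    {g h : Equiv.Perm (∀ n, X n)} (hg : IsPortrait X A g) (hh : IsPortrait X A h) :
    IsPortrait X A (g * h) := by
  obtain ⟨a, ha⟩ := hg
  obtain ⟨b, hb⟩ := hh
  refine ⟨fun m v => a m (fun i => h (extW X x m v) i.1) * b m v, fun w m => ?_⟩
  have key : (fun i : Fin m => h (extW X x m (fun i => w i.1)) i.1) = fun i : Fin m => h w i.1 := by
    funext i
    rw [hb, hb, extW_lt w i.2]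
    have : (fun j : Fin i.1 => extW X x m (fun i => w i.1) j.1) = fun j : Fin i.1 => w j.1 := by
      funext j
      exact extW_lt w (j.2.trans i.2)
    rw [this]
  beta_reduce
  rw [Equiv.Perm.mul_apply, ha, key, hb w m]
  rfl

theorem ring_eq {X : ℕ → Type} {x w : ∀ n, X n} {i j : ℕ} (hi : w ∈ ringX X x i)
    (hj : w ∈ ringX X x j) : i = j := by
  rcases lt_trichotomy i j with h | h | h
  · exact absurd (fun k hk => hj.1 k (by omega)) hi.2
  · exact h
  · exact absurd (fun k hk => hi.1 k (by omega)) hj.2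

theorem cyl_not_ring {X : ℕ → Type} {x w : ∀ n, X n} {i n : ℕ} (hi : w ∈ ringX X x i)
    (hw : w ∈ cylU X x n) : n ≤ i := by
  by_contra h
  exact hi.2 (fun k hk => hw k (by omega))

theorem cyl_or_ring {X : ℕ → Type} {x : ∀ n, X n} (w : ∀ n, X n) (n : ℕ) :
    w ∈ cylU X x n ∨ ∃ i : Fin n, w ∈ ringX X x i.1 := by
  induction n with
  | zero => left; intro i hi; omega
  | succ n ih =>
    rcases ih with h | ⟨i, hi⟩
    · by_cases h' : w ∈ cylU X x (n + 1)
      · exact Or.inl h'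
      · exact Or.inr ⟨⟨n, by omega⟩, h, h'⟩
    · exact Or.inr ⟨⟨i.1, by omega⟩, hi⟩

theorem ring_ne {X : ℕ → Type} {x w : ∀ n, X n} {i : ℕ} (hi : w ∈ ringX X x i) : w i ≠ x i := by
  intro h
  refine hi.2 (fun k hk => ?_)
  rcases Nat.lt_succ_iff_lt_or_eq.1 hk with h' | rfl
  · exact hi.1 k h'
  · exact h

theorem cyl_iff {X : ℕ → Type} {A : ∀ n, Subgroup (Equiv.Perm (X n))} {x : ∀ n, X n}
    {g : Equiv.Perm (∀ n, X n)} (hg : g ∈ discD X A x) (k : ℕ) (w : ∀ n, X n) :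
    g w ∈ cylU X x k ↔ w ∈ cylU X x k := by
  obtain ⟨⟨a, ha⟩, hx⟩ := hg
  have step : ∀ i, (∀ j, j < i → w j = x j) → (g w i = x i ↔ w i = x i) := by
    intro i hi
    have e : (fun j : Fin i => w j.1) = fun j : Fin i => x j.1 := funext fun j => hi j.1 j.2
    have h1 := ha x i
    rw [hx] at h1
    rw [ha, e]
    constructor
    · intro h
      rw [h1] at h
      exact ((a i _ : Equiv.Perm (X i)).injective (h.trans (congrArg _ rfl)))
    · intro h
      rw [h]; exact h1.symm
  constructor
  · intro h i
    induction i using Nat.strong_induction_on with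
    | _ i ih =>
      intro hi
      exact (step i (fun j hj => ih j hj (hj.trans hi))).1 (h i hi)
  · intro h i hi
    exact (step i (fun j hj => h j (hj.trans hi))).2 (h i hi)

theorem ring_iff {X : ℕ → Type} {A : ∀ n, Subgroup (Equiv.Perm (X n))} {x : ∀ n, X n}
    {g : Equiv.Perm (∀ n, X n)} (hg : g ∈ discD X A x) (k : ℕ) (w : ∀ n, X n) :
    g w ∈ ringX X x k ↔ w ∈ ringX X x k :=
  and_congr (cyl_iff hg k w) (not_congr (cyl_iff hg (k + 1) w))

theorem stabK_disc {X : ℕ → Type} {A : ∀ n, Subgroup (Equiv.Perm (X n))} {x : ∀ n, X n} {n : ℕ}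
    {g : Equiv.Perm (∀ n, X n)} (hg : g ∈ stabK X A x n) : g ∈ discD X A x :=
  ⟨hg.1, hg.2 x (fun _ _ => rfl)⟩

theorem glue_exists {X : ℕ → Type} {x : ∀ n, X n} {n : ℕ}
    (e : (i : Fin n) → Equiv.Perm ↥(ringX X x i.1)) (w : ∀ n, X n) :
    ∃ y : ∀ n, X n, (∀ (i : Fin n) (h : w ∈ ringX X x i.1), y = (e i ⟨w, h⟩).1) ∧
      (w ∈ cylU X x n → y = w) := by
  rcases cyl_or_ring (x := x) w n with h | ⟨i, hi⟩
  · exact ⟨w, fun i hi => absurd (cyl_not_ring hi h) (by omega), fun _ => rfl⟩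
  · refine ⟨(e i ⟨w, hi⟩).1, fun j hj => ?_, fun h => absurd (cyl_not_ring hi h) (by omega)⟩
    obtain rfl : i = j := Fin.ext (ring_eq hi hj)
    rfl

theorem glue_perm {X : ℕ → Type} {x : ∀ n, X n} {n : ℕ}
    (e : (i : Fin n) → Equiv.Perm ↥(ringX X x i.1)) :
    ∃ f : Equiv.Perm (∀ n, X n),
      (∀ (i : Fin n) (w : ↥(ringX X x i.1)), f w.1 = (e i w).1) ∧
      (∀ w ∈ cylU X x n, f w = w) := by
  choose F hF hF' using fun e : (i : Fin n) → Equiv.Perm ↥(ringX X x i.1) =>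
    glue_exists e
  have inv : ∀ (e e' : (i : Fin n) → Equiv.Perm ↥(ringX X x i.1)), (∀ i w, e i (e' i w) = w) →
      ∀ w, F e (F e' w) = w := by
    intro e e' hee w
    rcases cyl_or_ring (x := x) w n with h | ⟨i, hi⟩
    · rw [hF' e' w h, hF' e w h]
    · rw [hF e' w i hi, hF e _ i (e' i ⟨w, hi⟩).2, Subtype.coe_eta, hee]
  exact ⟨⟨F e, F (fun i => (e i).symm), inv _ _ (by simp), inv _ _ (by simp)⟩,
    fun i w => hF e w.1 i w.2, hF' e⟩

open Classical in
theorem glue_portrait {X : ℕ → Type} {A : ∀ n, Subgroup (Equiv.Perm (X n))} {x : ∀ n, X n} {n : ℕ}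
    (f : Equiv.Perm (∀ n, X n)) (g : Fin n → Equiv.Perm (∀ n, X n))
    (hg : ∀ i, g i ∈ discD X A x)
    (h1 : ∀ (i : Fin n), ∀ w ∈ ringX X x i.1, f w = g i w)
    (h2 : ∀ w ∈ cylU X x n, f w = w) : IsPortrait X A f := by
  choose a ha using fun i => (hg i).1
  have hfix : ∀ i m, (a i m (fun j => x j.1) : Equiv.Perm (X m)) (x m) = x m := by
    intro i m
    rw [← ha i x m, (hg i).2]
  refine ⟨fun m v => if h : ∃ i : Fin n, extW X x m v ∈ ringX X x i.1 then a h.choose m v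
    else if h : m < n then a ⟨m, h⟩ m v else 1, fun w m => ?_⟩
  beta_reduce
  have noring : (∀ j, j < m → j < n → w j = x j) →
      ¬ ∃ i : Fin n, extW X x m (fun i => w i.1) ∈ ringX X x i.1 := by
    rintro hw ⟨i, hi⟩
    refine ring_ne hi ?_
    by_cases him : i.1 < m
    · rw [extW_lt w him, hw _ him i.2]
    · rw [extW_ge w him]
  rcases cyl_or_ring (x := x) w n with h | ⟨i, hi⟩
  · rw [h2 w h, dif_neg (noring fun j _ hj => h j hj)]
    split_ifs with hm
    · have e : (fun j : Fin m => w j.1) = fun j : Fin m => x j.1 :=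
        funext fun j => h j.1 (j.2.trans hm)
      rw [e, h m hm, hfix]
    · rfl
  · rw [h1 i w hi]
    by_cases him : i.1 < m
    · have hr : extW X x m (fun i => w i.1) ∈ ringX X x i.1 := by
        refine ⟨fun k hk => ?_, fun hc => ring_ne hi ?_⟩
        · rw [extW_lt w (hk.trans him)]; exact hi.1 k hk
        · rw [← extW_lt (x := x) w him]; exact hc i.1 (Nat.lt_succ_self _)
      have hex : ∃ i : Fin n, extW X x m (fun i => w i.1) ∈ ringX X x i.1 := ⟨i, hr⟩
      rw [dif_pos hex]
      have : hex.choose = i := Fin.ext (ring_eq hex.choose_spec hr)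
      rw [this, ha]
    · have hmn : m < n := by omega
      rw [dif_neg (noring fun j hj _ => hi.1 j (by omega)), dif_pos hmn]
      rcases Nat.lt_or_ge m i.1 with hlt | hge
      · have e : (fun j : Fin m => w j.1) = fun j : Fin m => x j.1 :=
          funext fun j => hi.1 j.1 (j.2.trans hlt)
        rw [ha, e, hi.1 m hlt, hfix, hfix]
      · have hmi : i = ⟨m, hmn⟩ := Fin.ext (by simp; omega)
        rw [ha, hmi]

/-- For every `n ≥ 1`, the map sending `g ∈ K_n` to the tuple of its
restrictions `(g|X̂_0, …, g|X̂_{n-1})` is a group isomorphism onto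
`S_0 × S_1 × ⋯ × S_{n-1}`: it is a bijection compatible with products. -/
theorem stmt12 (X : ℕ → Type) [∀ n, Finite (X n)]
    (hcard : ∀ n, 2 ≤ Nat.card (X n))
    (A : ∀ n, Subgroup (Equiv.Perm (X n)))
    (htrans : ∀ n, ∀ y z : X n, ∃ a ∈ A n, a y = z)
    (x : ∀ n, X n) (n : ℕ) (hn : 1 ≤ n) :
    ∃ ψ : ↥(stabK X A x n) ≃ ((i : Fin n) → ↥(resS X A x i.1)),
      (∀ (g : ↥(stabK X A x n)) (i : Fin n) (w : ↥(ringX X x i.1)),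
        ((ψ g i).1 w).1 = g.1 w.1) ∧
      (∀ g h : ↥(stabK X A x n), ∃ hm : g.1 * h.1 ∈ stabK X A x n,
        ∀ i : Fin n, (ψ ⟨g.1 * h.1, hm⟩ i).1 = (ψ g i).1 * (ψ h i).1) := by
  classical
  let φ : ↥(stabK X A x n) → ((i : Fin n) → ↥(resS X A x i.1)) := fun g i =>
    ⟨g.1.subtypePerm (fun w => ring_iff (stabK_disc g.2) i.1 w),
      g.1, stabK_disc g.2, fun w => rfl⟩
  have hφ : ∀ (g : ↥(stabK X A x n)) (i : Fin n) (w : ↥(ringX X x i.1)),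
      ((φ g i).1 w).1 = g.1 w.1 := fun g i w => rfl
  have hbij : Function.Bijective φ := by
    constructor
    · intro g h hgh
      refine Subtype.ext (Equiv.ext fun w => ?_)
      rcases cyl_or_ring (x := x) w n with hw | ⟨i, hi⟩
      · rw [g.2.2 w hw, h.2.2 w hw]
      · rw [← hφ g i ⟨w, hi⟩, ← hφ h i ⟨w, hi⟩, hgh]
    · intro e
      obtain ⟨f, hf1, hf2⟩ := glue_perm (x := x) (fun i => (e i).1)
      choose g hg hge using fun i => (e i).2
      have hp : IsPortrait X A f := glue_portrait f g hg
        (fun i w hw => (hf1 i ⟨w, hw⟩).trans (hge i ⟨w, hw⟩)) hf2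
      refine ⟨⟨f, hp, hf2⟩, funext fun i => Subtype.ext (Equiv.ext fun w => Subtype.ext ?_)⟩
      rw [hφ]
      exact hf1 i w
  refine ⟨Equiv.ofBijective φ hbij, hφ, fun g h => ⟨⟨portrait_mul x g.2.1 h.2.1, fun w hw => ?_⟩,
    fun i => ?_⟩⟩
  · rw [Equiv.Perm.mul_apply, h.2.2 w hw, g.2.2 w hw]
  · ext w
    rfl
end

section
/- The map D → ∏_{n ≥ 0} S_n sending g to the sequence of its restrictions (g|X̂_n)_{n ≥ 0} is a group isomorphism; in particular the discriminant group D is isomorphic to the product ∏_{n ≥ 0} S_n. -/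
theorem discD_cyl {X : ℕ → Type} {A : ∀ n, Subgroup (Equiv.Perm (X n))} {x : ∀ n, X n}
    {g : Equiv.Perm (∀ n, X n)} (hg : g ∈ discD X A x) (n : ℕ) (w : ∀ n, X n) :
    g w ∈ cylU X x n ↔ w ∈ cylU X x n := by
  obtain ⟨⟨a, ha⟩, hx⟩ := hg
  have key : ∀ m, w ∈ cylU X x m → (g w m = x m ↔ w m = x m) := by
    intro m hm
    have h1 : (fun i : Fin m => w i.1) = (fun i : Fin m => x i.1) := by
      funext i
      exact hm i.1 i.2
    have h2 := ha x m
    rw [hx] at h2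
    have h3 := ha w m
    rw [h1] at h3
    rw [h3]
    constructor
    · intro h
      exact (a m (fun i => x i.1) : Equiv.Perm (X m)).injective (h.trans h2)
    · intro h
      rw [h]
      exact h2.symm
  have succ : ∀ (y : ∀ n, X n) m, y ∈ cylU X x (m + 1) ↔ y ∈ cylU X x m ∧ y m = x m := by
    intro y m
    constructor
    · intro h
      exact ⟨fun i hi => h i (by omega), h m (by omega)⟩
    · rintro ⟨h1, h2⟩ i hi
      rcases Nat.lt_succ_iff_lt_or_eq.mp hi with h | h
      · exact h1 i h
      · subst h
        exact h2
  induction n with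
  | zero => exact ⟨fun _ i hi => absurd hi (by omega), fun _ i hi => absurd hi (by omega)⟩
  | succ m ih =>
    refine (succ (g w) m).trans (Iff.trans ?_ (succ w m).symm)
    constructor
    · rintro ⟨h1, h2⟩
      exact ⟨ih.1 h1, (key m (ih.1 h1)).1 h2⟩
    · rintro ⟨h1, h2⟩
      exact ⟨ih.2 h1, (key m h1).2 h2⟩

theorem discD_ring {X : ℕ → Type} {A : ∀ n, Subgroup (Equiv.Perm (X n))} {x : ∀ n, X n}
    {g : Equiv.Perm (∀ n, X n)} (hg : g ∈ discD X A x) (n : ℕ) (w : ∀ n, X n) :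
    g w ∈ ringX X x n ↔ w ∈ ringX X x n := by
  unfold ringX
  rw [Set.mem_sdiff, Set.mem_sdiff, discD_cyl hg, discD_cyl hg]

theorem ring_or {X : ℕ → Type} (x w : ∀ n, X n) : w = x ∨ ∃ k, w ∈ ringX X x k := by
  classical
  by_cases h : ∃ i, w i ≠ x i
  · right
    refine ⟨Nat.find h, fun i hi => ?_, fun hc => Nat.find_spec h (hc _ (by omega))⟩
    exact not_not.mp (Nat.find_min h hi)
  · left
    funext i
    by_contra hc
    exact h ⟨i, hc⟩

theorem ring_unique {X : ℕ → Type} {x w : ∀ n, X n} {k l : ℕ} (hk : w ∈ ringX X x k)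
    (hl : w ∈ ringX X x l) : k = l := by
  rcases lt_trichotomy k l with h | h | h
  · exact absurd (fun i hi => hl.1 i (by omega)) hk.2
  · exact h
  · exact absurd (fun i hi => hk.1 i (by omega)) hl.2

theorem self_not_ring {X : ℕ → Type} {x : ∀ n, X n} {k : ℕ} : x ∉ ringX X x k :=
  fun h => h.2 (fun _ _ => rfl)

open Classical in
noncomputable def glueFun {X : ℕ → Type} {x : ∀ n, X n}
    (e : ∀ k, Equiv.Perm ↥(ringX X x k)) (w : ∀ n, X n) : ∀ n, X n :=
  if h : ∃ k, w ∈ ringX X x k then (e h.choose ⟨w, h.choose_spec⟩).1 else w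

theorem glueFun_ring {X : ℕ → Type} {x : ∀ n, X n}
    (e : ∀ k, Equiv.Perm ↥(ringX X x k)) {k : ℕ} (w : ↥(ringX X x k)) :
    glueFun e w.1 = (e k w).1 := by
  have h : ∃ k, w.1 ∈ ringX X x k := ⟨k, w.2⟩
  unfold glueFun
  rw [dif_pos h]
  have aux : ∀ l (hl : w.1 ∈ ringX X x l), (e l ⟨w.1, hl⟩).1 = (e k w).1 := by
    intro l hl
    obtain rfl := ring_unique hl w.2
    rfl
  exact aux _ _

theorem glueFun_self {X : ℕ → Type} {x : ∀ n, X n}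
    (e : ∀ k, Equiv.Perm ↥(ringX X x k)) : glueFun e x = x := by
  unfold glueFun
  rw [dif_neg]
  rintro ⟨k, hk⟩
  exact self_not_ring hk

theorem glueFun_inv {X : ℕ → Type} {x : ∀ n, X n}
    (e f : ∀ k, Equiv.Perm ↥(ringX X x k)) (hef : ∀ k w, f k (e k w) = w) (w : ∀ n, X n) :
    glueFun f (glueFun e w) = w := by
  rcases ring_or x w with rfl | ⟨k, hk⟩
  · rw [glueFun_self, glueFun_self]
  · have := glueFun_ring e ⟨w, hk⟩
    simp only at this
    rw [this, glueFun_ring, hef]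

noncomputable def gluePerm {X : ℕ → Type} {x : ∀ n, X n}
    (e : ∀ k, Equiv.Perm ↥(ringX X x k)) : Equiv.Perm (∀ n, X n) where
  toFun := glueFun e
  invFun := glueFun (fun k => (e k).symm)
  left_inv := glueFun_inv _ _ (fun k w => (e k).symm_apply_apply w)
  right_inv := glueFun_inv _ _ (fun k w => (e k).apply_symm_apply w)

theorem gluePerm_mem {X : ℕ → Type} {A : ∀ n, Subgroup (Equiv.Perm (X n))} {x : ∀ n, X n}
    (e : ∀ k, Equiv.Perm ↥(ringX X x k)) (he : ∀ k, e k ∈ resS X A x k) :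
    gluePerm e ∈ discD X A x := by
  classical
  refine ⟨?_, glueFun_self e⟩
  choose G hG hGe using he
  choose a ha using fun k => (hG k).1
  have main : ∀ (n : ℕ) (v : (i : Fin n) → X i.1), ∃ c : A n, ∀ w : ∀ n, X n,
      (fun i : Fin n => w i.1) = v → glueFun e w n = (c : Equiv.Perm (X n)) (w n) := by
    intro n v
    by_cases hv : ∃ w0 : ∀ n, X n, (fun i : Fin n => w0 i.1) = v ∧ ∃ k < n, w0 ∈ ringX X x k
    · obtain ⟨w0, hw0, k, hkn, hk⟩ := hv
      refine ⟨a k n v, fun w hw => ?_⟩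
      have hag : ∀ i, i < n → w i = w0 i := fun i hi => congrFun (hw.trans hw0.symm) ⟨i, hi⟩
      have hwk : w ∈ ringX X x k := by
        refine ⟨fun i hi => (hag i (by omega)).trans (hk.1 i hi), fun hc => hk.2 fun i hi => ?_⟩
        rw [← hag i (by omega)]
        exact hc i hi
      rw [glueFun_ring e ⟨w, hwk⟩, hGe, ha, hw]
    · refine ⟨a n n v, fun w hw => ?_⟩
      rcases ring_or x w with rfl | ⟨k, hk⟩
      · rw [glueFun_self, ← hw, ← ha, (hG n).2]
      · have hkn : n ≤ k := by
          by_contra hc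
          exact hv ⟨w, hw, k, by omega, hk⟩
        rcases hkn.eq_or_lt with rfl | hlt
        · rw [glueFun_ring e ⟨w, hk⟩, hGe, ha, hw]
        · rw [glueFun_ring e ⟨w, hk⟩, ← hw, ← ha, (e k ⟨w, hk⟩).2.1 n hlt]
          exact (((discD_cyl (hG n) k w).2 hk.1) n hlt).symm
  choose c hc using main
  exact ⟨c, fun w n => hc n _ w rfl⟩

theorem discD_mul {X : ℕ → Type} {A : ∀ n, Subgroup (Equiv.Perm (X n))} {x : ∀ n, X n}
    {g h : Equiv.Perm (∀ n, X n)} (hg : g ∈ discD X A x) (hh : h ∈ discD X A x) :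
    g * h ∈ discD X A x := by
  obtain ⟨⟨a, ha⟩, hgx⟩ := hg
  obtain ⟨⟨b, hb⟩, hhx⟩ := hh
  refine ⟨⟨fun n v => a n (fun i => (b i.1 (fun j => v ⟨j.1, j.2.trans i.2⟩) :
    Equiv.Perm (X i.1)) (v i)) * b n v, fun w n => ?_⟩, ?_⟩
  · rw [Equiv.Perm.mul_apply, ha, Subgroup.coe_mul, Equiv.Perm.mul_apply, ← hb]
    have : (fun i : Fin n => h w i.1) = fun i : Fin n =>
      (b i.1 (fun j => w j.1) : Equiv.Perm (X i.1)) (w i.1) := funext fun i => hb w i.1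
    rw [this]
  · rw [Equiv.Perm.mul_apply, hhx, hgx]

/-- The map sending `g ∈ D` to the sequence of its restrictions `(g|X̂_n)_{n ≥ 0}`
is a group isomorphism of the discriminant group `D` onto the product
`∏_{n ≥ 0} S_n`: it is a bijection compatible with products. -/
theorem stmt13 (X : ℕ → Type) [∀ n, Finite (X n)]
    (hcard : ∀ n, 2 ≤ Nat.card (X n))
    (A : ∀ n, Subgroup (Equiv.Perm (X n)))
    (htrans : ∀ n, ∀ y z : X n, ∃ a ∈ A n, a y = z)
    (x : ∀ n, X n) :
    ∃ ψ : ↥(discD X A x) ≃ ((k : ℕ) → ↥(resS X A x k)),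
      (∀ (g : ↥(discD X A x)) (k : ℕ) (w : ↥(ringX X x k)),
        ((ψ g k).1 w).1 = g.1 w.1) ∧
      (∀ g h : ↥(discD X A x), ∃ hm : g.1 * h.1 ∈ discD X A x,
        ∀ k : ℕ, (ψ ⟨g.1 * h.1, hm⟩ k).1 = (ψ g k).1 * (ψ h k).1) := by
  let F : ↥(discD X A x) → ((k : ℕ) → ↥(resS X A x k)) := fun g k =>
    ⟨g.1.subtypePerm (fun w => discD_ring g.2 k w), g.1, g.2, fun _ => rfl⟩
  have hF : ∀ g k (w : ↥(ringX X x k)), ((F g k).1 w).1 = g.1 w.1 := fun _ _ _ => rfl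
  let G : ((k : ℕ) → ↥(resS X A x k)) → ↥(discD X A x) := fun e =>
    ⟨gluePerm (fun k => (e k).1), gluePerm_mem _ (fun k => (e k).2)⟩
  refine ⟨⟨F, G, ?_, ?_⟩, hF, ?_⟩
  · intro g
    apply Subtype.ext
    apply Equiv.ext
    intro w
    change glueFun (fun k => (F g k).1) w = g.1 w
    rcases ring_or x w with rfl | ⟨k, hk⟩
    · rw [glueFun_self, g.2.2]
    · exact glueFun_ring (fun k => (F g k).1) ⟨w, hk⟩
  · intro e
    funext k
    apply Subtype.ext
    apply Equiv.ext
    intro w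
    apply Subtype.ext
    exact glueFun_ring (fun k => (e k).1) w
  · intro g h
    exact ⟨discD_mul g.2 h.2, fun k => rfl⟩
end

section
/- Let ℓ₁, ℓ₂ ≥ 3 be odd integers, and let n ∈ ℕ satisfy ℓ₁ ≤ n, ℓ₂ ≤ n and n < ℓ₁ + ℓ₂. Then there exist permutations σ₁, σ₂ of Fin n such that σ₁ and σ₂ are cycles, orderOf(σ₁) = ℓ₁, orderOf(σ₂) = ℓ₂, both σ₁ and σ₂ lie in the alternating group Alt(Fin n), and the subgroup they generate is all of Alt(Fin n). -/
open Equiv Equiv.Perm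
open scoped Pointwise

section
variable {n : ℕ}

def MR (G : Subgroup (Perm (Fin n))) (x y : Fin n) : Prop :=
  ∃ t ∈ G, t.IsThreeCycle ∧ t x ≠ x ∧ t y ≠ y

theorem MR.symm {G : Subgroup (Perm (Fin n))} {x y} (h : MR G x y) : MR G y x := by
  obtain ⟨t, h1, h2, h3, h4⟩ := h
  exact ⟨t, h1, h2, h4, h3⟩

theorem MR.conj {G : Subgroup (Perm (Fin n))} {x y} (h : MR G x y) {g} (hg : g ∈ G) :
    MR G (g x) (g y) := by
  obtain ⟨t, h1, h2, h3, h4⟩ := h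
  refine ⟨g * t * g⁻¹, G.mul_mem (G.mul_mem hg h1) (G.inv_mem hg), ?_, by simpa using h3, by simpa using h4⟩
  rw [IsThreeCycle, cycleType_conj]; exact h2

theorem three_cases {t : Perm (Fin n)} (h : t.IsThreeCycle) {u w} (hu : t u ≠ u) (hw : t w ≠ w) :
    w = u ∨ w = t u ∨ t w = u := by
  obtain ⟨i, hi⟩ := h.isCycle.exists_pow_eq hu hw
  have h3 : t ^ 3 = 1 := by rw [← h.orderOf]; exact pow_orderOf_eq_one t
  rw [← Nat.div_add_mod i 3, pow_add, pow_mul, h3, one_pow, one_mul] at hi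
  have := Nat.mod_lt i (show 3 > 0 by norm_num)
  interval_cases i % 3
  · left; simpa using hi.symm
  · right; left; simpa using hi.symm
  · right; right
    rw [← hi, ← Perm.mul_apply, ← pow_succ', h3]; rfl

theorem alt_le_of_conn {G : Subgroup (Perm (Fin n))} (a b : Fin n) (hab : MR G a b)
    (hc : ∀ x y, Relation.EqvGen (MR G) x y) : alternatingGroup (Fin n) ≤ G := by
  have hstep : ∀ x y, Relation.EqvGen (MR G) x y → ∃ g : G, g • x = y := by
    intro x y h
    induction h with
    | rel x y h =>
      obtain ⟨t, h1, h2, h3, h4⟩ := h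
      obtain ⟨i, hi⟩ := h2.isCycle.exists_pow_eq h3 h4
      exact ⟨⟨t ^ i, G.pow_mem h1 i⟩, hi⟩
    | refl x => exact ⟨1, one_smul _ _⟩
    | symm x y _ ih => obtain ⟨g, rfl⟩ := ih; exact ⟨g⁻¹, by simp⟩
    | trans x y z _ _ ih1 ih2 =>
      obtain ⟨g, rfl⟩ := ih1
      obtain ⟨k, rfl⟩ := ih2
      exact ⟨k * g, mul_smul _ _ _⟩
  have : MulAction.IsPretransitive G (Fin n) := ⟨fun x y => hstep x y (hc x y)⟩
  have hp : MulAction.IsPreprimitive G (Fin n) := by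
    refine ⟨fun {B} hB => ?_⟩
    by_cases hs : B.Subsingleton
    · exact Or.inl hs
    right
    have hnt : B.Nontrivial := Set.not_subsingleton_iff.mp hs
    have key : ∀ u v, MR G u v → u ∈ B → v ∈ B := by
      intro u v h hu
      obtain ⟨t, h1, h2, h3, h4⟩ := h
      obtain ⟨w, hw, hwu⟩ := hnt.exists_ne u
      have hfix : (⟨t, h1⟩ : G) • B = B := by
        apply (MulAction.isBlock_iff_smul_eq_of_nonempty.mp hB)
        by_cases hwt : t w = w
        · exact ⟨w, ⟨w, hw, hwt⟩, hw⟩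
        rcases three_cases h2 h3 hwt with h | h | h
        · exact absurd h hwu
        · exact ⟨w, ⟨u, hu, h.symm⟩, hw⟩
        · exact ⟨u, ⟨w, hw, h⟩, hu⟩
      rcases three_cases h2 h3 h4 with h | h | h
      · exact h ▸ hu
      · rw [← hfix]; exact ⟨u, hu, h.symm⟩
      · rw [← hfix] at hu
        obtain ⟨z, hz, hzu⟩ := hu
        have : z = v := t.injective (hzu.trans h.symm)
        exact this ▸ hz
    have key2 : ∀ u v, Relation.EqvGen (MR G) u v → (u ∈ B ↔ v ∈ B) := by
      intro u v h
      induction h with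
      | rel x y h => exact ⟨key x y h, key y x h.symm⟩
      | refl x => rfl
      | symm x y _ ih => exact ih.symm
      | trans x y z _ _ ih1 ih2 => exact ih1.trans ih2
    obtain ⟨x, hx⟩ := hnt.nonempty
    exact Set.eq_univ_of_forall fun y => (key2 x y (hc x y)).mp hx
  obtain ⟨t, h1, h2, -, -⟩ := hab
  exact alternatingGroup_le_of_isPreprimitive_of_isThreeCycle_mem hp h2 h1

theorem finishA {G : Subgroup (Perm (Fin n))} {σ τ : Perm (Fin n)} (hσ : σ ∈ G) (hτ : τ ∈ G)
    (cσ : σ.IsCycle) (cτ : τ.IsCycle) (hall : ∀ x, σ x ≠ x ∨ τ x ≠ x) {b c : Fin n}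
    (h : MR G b c) (h1 : σ b ≠ b) (h2 : σ c = c) (h3 : τ c ≠ c) (h4 : τ b = b) :
    alternatingGroup (Fin n) ≤ G := by
  have hb : ∀ x, Relation.EqvGen (MR G) b x := by
    intro x
    rcases hall x with hx | hx
    · obtain ⟨i, rfl⟩ := cσ.exists_zpow_eq h1 hx
      have := h.conj (G.zpow_mem hσ i)
      rw [zpow_apply_eq_self_of_apply_eq_self h2] at this
      exact (Relation.EqvGen.rel _ _ h).trans _ _ _ (Relation.EqvGen.rel _ _ this.symm)
    · obtain ⟨i, rfl⟩ := cτ.exists_zpow_eq h3 hx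
      have := h.conj (G.zpow_mem hτ i)
      rw [zpow_apply_eq_self_of_apply_eq_self h4] at this
      exact Relation.EqvGen.rel _ _ this
  exact alt_le_of_conn b c h fun x y => ((hb x).symm _ _).trans _ _ _ (hb y)

theorem finishB {G : Subgroup (Perm (Fin n))} {σ : Perm (Fin n)} (hσ : σ ∈ G)
    (cσ : σ.IsCycle) (hall : ∀ x, σ x ≠ x) {b : Fin n}
    (h : MR G b (σ b)) : alternatingGroup (Fin n) ≤ G := by
  have hb : ∀ i : ℕ, Relation.EqvGen (MR G) b ((σ ^ i) b) := by
    intro i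
    induction i with
    | zero => exact Relation.EqvGen.refl _
    | succ i ih =>
      have := h.conj (G.pow_mem hσ i)
      rw [← Perm.mul_apply, ← pow_succ] at this
      exact ih.trans _ _ _ (Relation.EqvGen.rel _ _ this)
  have hb : ∀ x, Relation.EqvGen (MR G) b x := by
    intro x
    obtain ⟨i, rfl⟩ := cσ.exists_pow_eq (hall b) (hall x)
    exact hb i
  exact alt_le_of_conn b _ h fun x y => ((hb x).symm _ _).trans _ _ _ (hb y)

theorem val_cyc (i j x : Fin n) (hij : i ≤ j) : (Fin.cycleIcc i j x).val =
    if x.val < i.val then x.val else if x.val < j.val then x.val + 1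
      else if x.val = j.val then i.val else x.val := by
  have : NeZero n := ⟨by have := x.2; omega⟩
  split_ifs with h1 h2 h3
  · rw [Fin.cycleIcc_of_lt h1]
  · rw [Fin.cycleIcc_of_ge_of_lt (not_lt.mp h1) h2]
    apply Fin.val_add_one_of_lt'
    have := j.2; omega
  · rw [Fin.ext h3, Fin.cycleIcc_of_last hij]
  · rw [Fin.cycleIcc_of_gt]
    rw [Fin.lt_def]; omega

theorem mr_of {G : Subgroup (Perm (Fin n))} {a b c : Fin n} (hab : a ≠ b) (hac : a ≠ c) (hbc : b ≠ c)
    (h : swap a b * swap a c ∈ G) : MR G a b ∧ MR G a c ∧ MR G b c := by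
  have h3 := isThreeCycle_swap_mul_swap_same hab hac hbc
  have ha : (swap a b * swap a c) a ≠ a := by
    simp [swap_apply_of_ne_of_ne hac.symm hbc.symm, hac.symm]
  have hb : (swap a b * swap a c) b ≠ b := by
    simp [swap_apply_of_ne_of_ne hab.symm hbc, hab]
  have hc : (swap a b * swap a c) c ≠ c := by
    simp [hbc]
  exact ⟨⟨_, h, h3, ha, hb⟩, ⟨_, h, h3, ha, hc⟩, ⟨_, h, h3, hb, hc⟩⟩

theorem two_double {a b c d a' b' e : Fin n}
   (h : [a, b, c, d, a', b', e].Nodup) :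
   ((swap a b * swap c d) * (swap a' b' * swap e d))^2 = (swap d c * swap d e)^2 := by
  simp at h
  have e1 : Commute (swap a b) (swap c d) := (Perm.disjoint_swap_swap (by simp; tauto)).commute
  have e2 : Commute (swap a b) (swap a' b') := (Perm.disjoint_swap_swap (by simp; tauto)).commute
  have e3 : Commute (swap a b) (swap e d) := (Perm.disjoint_swap_swap (by simp; tauto)).commute
  have e4 : Commute (swap a' b') (swap c d) := (Perm.disjoint_swap_swap (by simp; tauto)).commute
  have e5 : Commute (swap a' b') (swap e d) := (Perm.disjoint_swap_swap (by simp; tauto)).commute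
  have : (swap a b * swap c d) * (swap a' b' * swap e d) =
      (swap a b * swap a' b') * (swap c d * swap e d) := by
    simp only [mul_assoc]; congr 1; simp only [← mul_assoc]; rw [e4.eq]
  rw [this, Commute.mul_pow, Commute.mul_pow e2, swap_comm c d, swap_comm e d]
  · simp [sq]
  · exact ((e1.mul_right e3)).mul_left (e4.mul_right e5)


theorem cyc_facts (i j : Fin n) (l : ℕ) (hl : j.val + 1 = i.val + l) (h3 : 3 ≤ l) (ho : Odd l) :
    (Fin.cycleIcc i j).IsCycle ∧ orderOf (Fin.cycleIcc i j) = l ∧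
    Fin.cycleIcc i j ∈ alternatingGroup (Fin n) := by
  have hij : i < j := by rw [Fin.lt_def]; omega
  refine ⟨Fin.isCycle_cycleIcc hij, ?_, ?_⟩
  · rw [← lcm_cycleType, Fin.cycleType_cycleIcc_of_lt hij]
    simp; omega
  · rw [mem_alternatingGroup, Fin.sign_cycleIcc_of_le hij.le]
    apply Even.neg_one_pow
    obtain ⟨m, rfl⟩ := ho
    exact ⟨m, by omega⟩

theorem val_pow_cyc (i j : Fin n) (hi : i.val = 0) (x : Fin n) (hx : x ≤ j) (k : ℕ)
    (hk : k ≤ j.val) : ((Fin.cycleIcc i j ^ k) x).val =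
    if x.val + k ≤ j.val then x.val + k else x.val + k - (j.val + 1) := by
  have hij : i ≤ j := by rw [Fin.le_def]; omega
  rw [Fin.le_def] at hx
  induction k with
  | zero => simp; omega
  | succ k ih =>
    rw [pow_succ', Perm.mul_apply, val_cyc _ _ _ hij, ih (by omega)]
    split_ifs <;> omega

theorem exists_shift (l r : ℕ) (hr : r + 2 ≤ l) (hr1 : 1 ≤ r)
    (h : 9 ≤ l ∨ (l = 7 ∧ r ≠ 2 ∧ r ≠ 4)) :
    ∃ j, 2 ≤ j ∧ j + 2 ≤ l ∧ j ≠ r ∧ j ≠ r + 1 ∧ j + r ≠ l ∧ j + r + 1 ≠ l := by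
  by_contra H
  rcases h with h | ⟨h, h2, h4⟩
  · by_cases e2 : 2 ≠ r ∧ 2 ≠ r + 1 ∧ 2 + r ≠ l ∧ 2 + r + 1 ≠ l
    · exact H ⟨2, by omega⟩
    by_cases e3 : 3 ≠ r ∧ 3 ≠ r + 1 ∧ 3 + r ≠ l ∧ 3 + r + 1 ≠ l
    · exact H ⟨3, by omega⟩
    by_cases e4 : 4 ≠ r ∧ 4 ≠ r + 1 ∧ 4 + r ≠ l ∧ 4 + r + 1 ≠ l
    · exact H ⟨4, by omega⟩
    by_cases e5 : 5 ≠ r ∧ 5 ≠ r + 1 ∧ 5 + r ≠ l ∧ 5 + r + 1 ≠ l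
    · exact H ⟨5, by omega⟩
    exact H ⟨6, by omega⟩
  · subst h
    by_cases e2 : 2 ≠ r ∧ 2 ≠ r + 1 ∧ 2 + r ≠ 7 ∧ 2 + r + 1 ≠ 7
    · exact H ⟨2, by omega⟩
    exact H ⟨3, by omega⟩

theorem val_swap (a b x : Fin n) : (swap a b x).val =
    if x.val = a.val then b.val else if x.val = b.val then a.val else x.val := by
  rw [swap_apply_def]
  simp only [Fin.ext_iff]
  split_ifs <;> rfl

/-- commutator when the overlap is at least two -/
theorem comm_double (z j i m r1 c : Fin n) (hz : z.val = 0) (hm : m.val + 1 = n)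
    (hc : c.val = j.val + 1) (hr1 : r1.val = i.val + 1) (hi : 1 ≤ i.val) (hij : i.val < j.val) :
    Fin.cycleIcc z j * Fin.cycleIcc i m * (Fin.cycleIcc z j)⁻¹ * (Fin.cycleIcc i m)⁻¹ =
      swap i r1 * swap z c := by
  rw [mul_inv_eq_iff_eq_mul, mul_inv_eq_iff_eq_mul]
  have h1 : z ≤ j := by rw [Fin.le_def]; omega
  have h2 : i ≤ m := by rw [Fin.le_def]; omega
  ext x
  have := x.2
  have := c.2
  simp only [Perm.mul_apply, val_cyc _ _ _ h1, val_cyc _ _ _ h2, val_swap, hz]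
  grind

theorem comm_one (z i m c : Fin n) (hz : z.val = 0) (hm : m.val + 1 = n)
    (hc : c.val = i.val + 1) (hi : 1 ≤ i.val) (hcm : c < m) :
    Fin.cycleIcc z i * Fin.cycleIcc i m * (Fin.cycleIcc z i)⁻¹ * (Fin.cycleIcc i m)⁻¹ =
      swap z i * swap z c := by
  rw [mul_inv_eq_iff_eq_mul, mul_inv_eq_iff_eq_mul]
  have h1 : z ≤ i := by rw [Fin.le_def]; omega
  have h2 : i ≤ m := by rw [Fin.le_def]; omega
  rw [Fin.lt_def] at hcm
  ext x
  have := x.2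
  simp only [Perm.mul_apply, val_cyc _ _ _ h1, val_cyc _ _ _ h2, val_swap, hz]
  grind

theorem comm_full (z i m r1 : Fin n) (hz : z.val = 0) (hm : m.val + 1 = n)
    (hc : r1.val = i.val + 1) (hi : 1 ≤ i.val) (hcm : r1 < m) :
    Fin.cycleIcc z m * Fin.cycleIcc i m * (Fin.cycleIcc z m)⁻¹ * (Fin.cycleIcc i m)⁻¹ =
      swap z i * swap z r1 := by
  rw [mul_inv_eq_iff_eq_mul, mul_inv_eq_iff_eq_mul]
  have h1 : z ≤ m := by rw [Fin.le_def]; omega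
  have h2 : i ≤ m := by rw [Fin.le_def]; omega
  rw [Fin.lt_def] at hcm
  ext x
  have := x.2
  simp only [Perm.mul_apply, val_cyc _ _ _ h1, val_cyc _ _ _ h2, val_swap, hz]
  grind

theorem small_3_3_4 (G : Subgroup (Perm (Fin 4)))
    (hs : Fin.cycleIcc (0 : Fin 4) 2 ∈ G) (ht : Fin.cycleIcc (1 : Fin 4) 3 ∈ G) :
    MR G (0 : Fin 4) 3 := by
  have h : ((Fin.cycleIcc (0 : Fin 4) 2) * (Fin.cycleIcc (1 : Fin 4) 3)⁻¹) ^ 1 =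
      swap 0 3 * swap 0 1 := by decide +kernel
  have hm := G.pow_mem (G.mul_mem hs (G.inv_mem ht)) 1
  rw [h] at hm
  exact (mr_of (by decide) (by decide) (by decide) hm).1

theorem small_5_3_6 (G : Subgroup (Perm (Fin 6)))
    (hs : Fin.cycleIcc (0 : Fin 6) 4 ∈ G) (ht : Fin.cycleIcc (3 : Fin 6) 5 ∈ G) :
    MR G (0 : Fin 6) 5 := by
  have h : ((Fin.cycleIcc (0 : Fin 6) 4) * (Fin.cycleIcc (3 : Fin 6) 5) * (Fin.cycleIcc (0 : Fin 6) 4)⁻¹) ^ 1 =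
      swap 0 4 * swap 0 5 := by decide +kernel
  have hm := G.pow_mem (G.mul_mem (G.mul_mem hs ht) (G.inv_mem hs)) 1
  rw [h] at hm
  exact (mr_of (by decide) (by decide) (by decide) hm).2.1

theorem small_5_5_6 (G : Subgroup (Perm (Fin 6)))
    (hs : Fin.cycleIcc (0 : Fin 6) 4 ∈ G) (ht : Fin.cycleIcc (1 : Fin 6) 5 ∈ G) :
    MR G (0 : Fin 6) 5 := by
  have h : ((Fin.cycleIcc (0 : Fin 6) 4) * (Fin.cycleIcc (1 : Fin 6) 5)⁻¹) ^ 1 =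
      swap 0 5 * swap 0 1 := by decide +kernel
  have hm := G.pow_mem (G.mul_mem hs (G.inv_mem ht)) 1
  rw [h] at hm
  exact (mr_of (by decide) (by decide) (by decide) hm).1

theorem small_5_5_7 (G : Subgroup (Perm (Fin 7)))
    (hs : Fin.cycleIcc (0 : Fin 7) 4 ∈ G) (ht : Fin.cycleIcc (2 : Fin 7) 6 ∈ G) :
    MR G (1 : Fin 7) 6 := by
  have h : ((Fin.cycleIcc (0 : Fin 7) 4) * (Fin.cycleIcc (0 : Fin 7) 4) * (Fin.cycleIcc (2 : Fin 7) 6)⁻¹ * (Fin.cycleIcc (0 : Fin 7) 4)) ^ 2 =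
      swap 1 6 * swap 1 5 := by decide +kernel
  have hm := G.pow_mem (G.mul_mem (G.mul_mem (G.mul_mem hs hs) (G.inv_mem ht)) hs) 2
  rw [h] at hm
  exact (mr_of (by decide) (by decide) (by decide) hm).1

theorem small_5_5_8 (G : Subgroup (Perm (Fin 8)))
    (hs : Fin.cycleIcc (0 : Fin 8) 4 ∈ G) (ht : Fin.cycleIcc (3 : Fin 8) 7 ∈ G) :
    MR G (1 : Fin 8) 6 := by
  have h : ((Fin.cycleIcc (0 : Fin 8) 4) * (Fin.cycleIcc (0 : Fin 8) 4) * (Fin.cycleIcc (3 : Fin 8) 7)⁻¹ * (Fin.cycleIcc (3 : Fin 8) 7)⁻¹) ^ 5 =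
      swap 1 3 * swap 1 6 := by decide +kernel
  have hm := G.pow_mem (G.mul_mem (G.mul_mem (G.mul_mem hs hs) (G.inv_mem ht)) (G.inv_mem ht)) 5
  rw [h] at hm
  exact (mr_of (by decide) (by decide) (by decide) hm).2.1

theorem small_7_5_9 (G : Subgroup (Perm (Fin 9)))
    (hs : Fin.cycleIcc (0 : Fin 9) 6 ∈ G) (ht : Fin.cycleIcc (4 : Fin 9) 8 ∈ G) :
    MR G (2 : Fin 9) 7 := by
  have h : ((Fin.cycleIcc (0 : Fin 9) 6) * (Fin.cycleIcc (0 : Fin 9) 6) * (Fin.cycleIcc (4 : Fin 9) 8) * (Fin.cycleIcc (4 : Fin 9) 8) * (Fin.cycleIcc (0 : Fin 9) 6) * (Fin.cycleIcc (4 : Fin 9) 8)⁻¹) ^ 4 =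
      swap 2 7 * swap 2 5 := by decide +kernel
  have hm := G.pow_mem (G.mul_mem (G.mul_mem (G.mul_mem (G.mul_mem (G.mul_mem hs hs) ht) ht) hs) (G.inv_mem ht)) 4
  rw [h] at hm
  exact (mr_of (by decide) (by decide) (by decide) hm).1

theorem small_7_7_9 (G : Subgroup (Perm (Fin 9)))
    (hs : Fin.cycleIcc (0 : Fin 9) 6 ∈ G) (ht : Fin.cycleIcc (2 : Fin 9) 8 ∈ G) :
    MR G (0 : Fin 9) 8 := by
  have h : ((Fin.cycleIcc (0 : Fin 9) 6) * (Fin.cycleIcc (0 : Fin 9) 6) * (Fin.cycleIcc (2 : Fin 9) 8) * (Fin.cycleIcc (2 : Fin 9) 8) * (Fin.cycleIcc (0 : Fin 9) 6)⁻¹ * (Fin.cycleIcc (2 : Fin 9) 8)) ^ 4 =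
      swap 0 3 * swap 0 8 := by decide +kernel
  have hm := G.pow_mem (G.mul_mem (G.mul_mem (G.mul_mem (G.mul_mem (G.mul_mem hs hs) ht) ht) (G.inv_mem hs)) ht) 4
  rw [h] at hm
  exact (mr_of (by decide) (by decide) (by decide) hm).2.1

theorem small_7_7_11 (G : Subgroup (Perm (Fin 11)))
    (hs : Fin.cycleIcc (0 : Fin 11) 6 ∈ G) (ht : Fin.cycleIcc (4 : Fin 11) 10 ∈ G) :
    MR G (2 : Fin 11) 7 := by
  have h : ((Fin.cycleIcc (0 : Fin 11) 6) * (Fin.cycleIcc (0 : Fin 11) 6) * (Fin.cycleIcc (4 : Fin 11) 10) * (Fin.cycleIcc (4 : Fin 11) 10) * (Fin.cycleIcc (0 : Fin 11) 6) * (Fin.cycleIcc (4 : Fin 11) 10)⁻¹) ^ 4 =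
      swap 2 7 * swap 2 5 := by decide +kernel
  have hm := G.pow_mem (G.mul_mem (G.mul_mem (G.mul_mem (G.mul_mem (G.mul_mem hs hs) ht) ht) hs) (G.inv_mem ht)) 4
  rw [h] at hm
  exact (mr_of (by decide) (by decide) (by decide) hm).1

theorem small_all (G : Subgroup (Perm (Fin n))) (l₁ l₂ : ℕ) (z j i m : Fin n)
    (hz : z.val = 0) (hj : j.val + 1 = l₁) (hi : i.val + l₂ = n) (hm : m.val + 1 = n)
    (hs1 : Fin.cycleIcc z j ∈ G) (ht1 : Fin.cycleIcc i m ∈ G)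
    (hs : (l₁ = 3 ∧ l₂ = 3 ∧ n = 4) ∨ (l₁ = 5 ∧ l₂ = 3 ∧ n = 6) ∨ (l₁ = 5 ∧ l₂ = 5 ∧ n = 6) ∨ (l₁ = 5 ∧ l₂ = 5 ∧ n = 7) ∨ (l₁ = 5 ∧ l₂ = 5 ∧ n = 8) ∨ (l₁ = 7 ∧ l₂ = 5 ∧ n = 9) ∨ (l₁ = 7 ∧ l₂ = 7 ∧ n = 9) ∨ (l₁ = 7 ∧ l₂ = 7 ∧ n = 11)) :
    ∃ b c, b < i ∧ j < c ∧ MR G b c := by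
    rcases hs with hs | hs | hs | hs | hs | hs | hs | hs
    · obtain ⟨rfl, rfl, rfl⟩ := hs
      obtain rfl : z = 0 := Fin.ext hz
      obtain rfl : j = 2 := Fin.ext (by simpa using hj)
      obtain rfl : i = 1 := Fin.ext (by simpa using hi)
      obtain rfl : m = 3 := Fin.ext (by simpa using hm)
      exact ⟨_, _, by decide, by decide, small_3_3_4 G hs1 ht1⟩
    · obtain ⟨rfl, rfl, rfl⟩ := hs
      obtain rfl : z = 0 := Fin.ext hz
      obtain rfl : j = 4 := Fin.ext (by simpa using hj)
      obtain rfl : i = 3 := Fin.ext (by simpa using hi)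
      obtain rfl : m = 5 := Fin.ext (by simpa using hm)
      exact ⟨_, _, by decide, by decide, small_5_3_6 G hs1 ht1⟩
    · obtain ⟨rfl, rfl, rfl⟩ := hs
      obtain rfl : z = 0 := Fin.ext hz
      obtain rfl : j = 4 := Fin.ext (by simpa using hj)
      obtain rfl : i = 1 := Fin.ext (by simpa using hi)
      obtain rfl : m = 5 := Fin.ext (by simpa using hm)
      exact ⟨_, _, by decide, by decide, small_5_5_6 G hs1 ht1⟩
    · obtain ⟨rfl, rfl, rfl⟩ := hs
      obtain rfl : z = 0 := Fin.ext hz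
      obtain rfl : j = 4 := Fin.ext (by simpa using hj)
      obtain rfl : i = 2 := Fin.ext (by simpa using hi)
      obtain rfl : m = 6 := Fin.ext (by simpa using hm)
      exact ⟨_, _, by decide, by decide, small_5_5_7 G hs1 ht1⟩
    · obtain ⟨rfl, rfl, rfl⟩ := hs
      obtain rfl : z = 0 := Fin.ext hz
      obtain rfl : j = 4 := Fin.ext (by simpa using hj)
      obtain rfl : i = 3 := Fin.ext (by simpa using hi)
      obtain rfl : m = 7 := Fin.ext (by simpa using hm)
      exact ⟨_, _, by decide, by decide, small_5_5_8 G hs1 ht1⟩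
    · obtain ⟨rfl, rfl, rfl⟩ := hs
      obtain rfl : z = 0 := Fin.ext hz
      obtain rfl : j = 6 := Fin.ext (by simpa using hj)
      obtain rfl : i = 4 := Fin.ext (by simpa using hi)
      obtain rfl : m = 8 := Fin.ext (by simpa using hm)
      exact ⟨_, _, by decide, by decide, small_7_5_9 G hs1 ht1⟩
    · obtain ⟨rfl, rfl, rfl⟩ := hs
      obtain rfl : z = 0 := Fin.ext hz
      obtain rfl : j = 6 := Fin.ext (by simpa using hj)
      obtain rfl : i = 2 := Fin.ext (by simpa using hi)
      obtain rfl : m = 8 := Fin.ext (by simpa using hm)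
      exact ⟨_, _, by decide, by decide, small_7_7_9 G hs1 ht1⟩
    · obtain ⟨rfl, rfl, rfl⟩ := hs
      obtain rfl : z = 0 := Fin.ext hz
      obtain rfl : j = 6 := Fin.ext (by simpa using hj)
      obtain rfl : i = 4 := Fin.ext (by simpa using hi)
      obtain rfl : m = 10 := Fin.ext (by simpa using hm)
      exact ⟨_, _, by decide, by decide, small_7_7_11 G hs1 ht1⟩

theorem double_case (G : Subgroup (Perm (Fin n))) (l₁ : ℕ) (z j i m : Fin n)
    (hz : z.val = 0) (hj : j.val + 1 = l₁) (hm : m.val + 1 = n)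
    (hln : l₁ < n) (hi1 : 1 ≤ i.val) (hij : i.val < j.val)
    (hs1 : Fin.cycleIcc z j ∈ G) (ht1 : Fin.cycleIcc i m ∈ G)
    (h : 9 ≤ l₁ ∨ (l₁ = 7 ∧ i.val ≠ 2 ∧ i.val ≠ 4)) :
    ∃ b c, b < i ∧ j < c ∧ MR G b c := by
  obtain ⟨k, hk⟩ := exists_shift l₁ i.val (by omega) hi1 h
  let r1 : Fin n := ⟨i.val + 1, by omega⟩
  let c : Fin n := ⟨j.val + 1, by omega⟩
  have hr1 : r1.val = i.val + 1 := rfl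
  have hc : c.val = j.val + 1 := rfl
  have hD : swap i r1 * swap z c ∈ G := by
    rw [← comm_double z j i m r1 c hz hm hc hr1 hi1 hij]
    exact G.mul_mem (G.mul_mem (G.mul_mem hs1 ht1) (G.inv_mem hs1)) (G.inv_mem ht1)
  set g := Fin.cycleIcc z j ^ k with hg
  have hgG : g ∈ G := G.pow_mem hs1 k
  have hE : g * (swap i r1 * swap z c) * g⁻¹ ∈ G :=
    G.mul_mem (G.mul_mem hgG hD) (G.inv_mem hgG)
  have hE2 : g * (swap i r1 * swap z c) * g⁻¹ =
      swap (g i) (g r1) * swap (g z) (g c) := by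
    rw [swap_apply_apply, swap_apply_apply]; group
  have hgc : g c = c := by
    apply pow_apply_eq_self_of_apply_eq_self
    exact Fin.cycleIcc_of_gt (by rw [Fin.lt_def]; omega)
  have vi := val_pow_cyc z j hz i (by rw [Fin.le_def]; omega) k (by omega)
  have vr := val_pow_cyc z j hz r1 (by rw [Fin.le_def]; omega) k (by omega)
  have vz := val_pow_cyc z j hz z (by rw [Fin.le_def]; omega) k (by omega)
  rw [← hg] at vi vr vz
  rw [hE2, hgc] at hE
  have hnd : [i, r1, z, c, g i, g r1, g z].Nodup := by
    simp only [List.nodup_cons, List.mem_cons, Fin.ext_iff, List.not_mem_nil, not_or,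
      List.nodup_nil, not_false_eq_true, and_true]
    clear hE hE2 hgc
    split_ifs at vi vr vz <;> and_intros <;> omega
  have hsq := G.pow_mem (G.mul_mem hD hE) 2
  rw [two_double hnd] at hsq
  simp only [List.nodup_cons, List.mem_cons, not_or] at hnd
  have n1 : c ≠ z := by tauto
  have n2 : c ≠ g z := by tauto
  have n3 : z ≠ g z := by tauto
  have h3 := isThreeCycle_swap_mul_swap_same n1 n2 n3
  have ht : swap c z * swap c (g z) ∈ G := by
    have h4 : (swap c z * swap c (g z)) ^ 3 = 1 := by
      rw [← h3.orderOf]; exact pow_orderOf_eq_one _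
    have := G.pow_mem hsq 2
    rwa [← pow_mul, show 2 * 2 = 3 + 1 from rfl, pow_succ, h4, one_mul] at this
  exact ⟨z, c, by rw [Fin.lt_def]; omega, by rw [Fin.lt_def]; omega, (mr_of n1 n2 n3 ht).1.symm⟩

theorem interval_le (l₁ l₂ : ℕ) (h₂ : 3 ≤ l₂) (hle : l₂ ≤ l₁)
    (hodd₁ : Odd l₁) (hodd₂ : Odd l₂) (hn₁ : l₁ < n) (hsum : n < l₁ + l₂)
    (G : Subgroup (Perm (Fin n))) (z j i m : Fin n)
    (hz : z.val = 0) (hj : j.val + 1 = l₁) (hi : i.val + l₂ = n) (hm : m.val + 1 = n)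
    (hs1 : Fin.cycleIcc z j ∈ G) (ht1 : Fin.cycleIcc i m ∈ G) :
    alternatingGroup (Fin n) ≤ G := by
  have hzj : z < j := by rw [Fin.lt_def]; omega
  have him : i < m := by rw [Fin.lt_def]; omega
  have key : ∃ b c, b < i ∧ j < c ∧ MR G b c := by
    by_cases hk : i = j
    · subst hk
      let c : Fin n := ⟨i.val + 1, by omega⟩
      have hc : c.val = i.val + 1 := rfl
      have hD := G.mul_mem (G.mul_mem (G.mul_mem hs1 ht1) (G.inv_mem hs1)) (G.inv_mem ht1)
      rw [comm_one z i m c hz hm hc (by omega) (by rw [Fin.lt_def]; omega)] at hD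
      exact ⟨z, c, by rw [Fin.lt_def]; omega, by rw [Fin.lt_def]; omega,
        (mr_of (by rw [Ne, Fin.ext_iff]; omega) (by rw [Ne, Fin.ext_iff]; omega)
          (by rw [Ne, Fin.ext_iff]; omega) hD).2.1⟩
    · rw [Fin.ext_iff] at hk
      by_cases h9 : 9 ≤ l₁ ∨ (l₁ = 7 ∧ i.val ≠ 2 ∧ i.val ≠ 4)
      · exact double_case G l₁ z j i m hz hj hm hn₁ (by omega) (by omega) hs1 ht1 h9
      · refine small_all G l₁ l₂ z j i m hz hj hi hm hs1 ht1 ?_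
        obtain ⟨p, hp⟩ := hodd₁
        obtain ⟨q, hq⟩ := hodd₂
        have e1 : l₁ = 3 ∨ l₁ = 5 ∨ l₁ = 7 := by omega
        have e2 : l₂ = 3 ∨ l₂ = 5 ∨ l₂ = 7 := by omega
        clear hs1 ht1 hzj him hm
        rcases e1 with e1 | e1 | e1 <;> rcases e2 with e2 | e2 | e2 <;> simp [e1, e2] <;> omega
  obtain ⟨b, c, hb, hc, hbc⟩ := key
  have hb' : b < j := by rw [Fin.lt_def] at *; omega
  have hc' : i < c := by rw [Fin.lt_def] at *; omega
  refine finishA hs1 ht1 (Fin.isCycle_cycleIcc hzj) (Fin.isCycle_cycleIcc him) ?_ hbc ?_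
    (Fin.cycleIcc_of_gt hc) ?_ (Fin.cycleIcc_of_lt hb)
  · intro x
    simp only [Ne, Fin.ext_iff, val_cyc _ _ _ hzj.le, val_cyc _ _ _ him.le]
    rw [Fin.lt_def] at *
    have := x.2
    split_ifs <;> omega
  · simp only [Ne, Fin.ext_iff, val_cyc _ _ _ hzj.le]
    rw [Fin.lt_def] at *
    split_ifs <;> omega
  · simp only [Ne, Fin.ext_iff, val_cyc _ _ _ him.le]
    rw [Fin.lt_def] at *
    have := c.2
    split_ifs <;> omega

theorem full_moves (z m : Fin n) (hz : z.val = 0) (hm : m.val + 1 = n) (hn : 2 ≤ n) (x : Fin n) :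
    Fin.cycleIcc z m x ≠ x := by
  have hzm : z ≤ m := by rw [Fin.le_def]; omega
  simp only [Ne, Fin.ext_iff, val_cyc _ _ _ hzm]
  have := x.2
  split_ifs <;> omega

theorem full_le (l₂ : ℕ) (h₂ : 3 ≤ l₂) (hn₁ : l₂ < n)
    (G : Subgroup (Perm (Fin n))) (z i m : Fin n)
    (hz : z.val = 0) (hi : i.val + l₂ = n) (hm : m.val + 1 = n)
    (hs1 : Fin.cycleIcc z m ∈ G) (ht1 : Fin.cycleIcc i m ∈ G) :
    alternatingGroup (Fin n) ≤ G := by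
  have hzm : z < m := by rw [Fin.lt_def]; omega
  let r1 : Fin n := ⟨i.val + 1, by omega⟩
  have hr1 : r1.val = i.val + 1 := rfl
  have hD := G.mul_mem (G.mul_mem (G.mul_mem hs1 ht1) (G.inv_mem hs1)) (G.inv_mem ht1)
  rw [comm_full z i m r1 hz hm hr1 (by omega) (by rw [Fin.lt_def]; omega)] at hD
  have hR := (mr_of (by rw [Ne, Fin.ext_iff]; omega) (by rw [Ne, Fin.ext_iff]; omega)
          (by rw [Ne, Fin.ext_iff]; omega) hD).2.2
  refine finishB (b := i) hs1 (Fin.isCycle_cycleIcc hzm) (full_moves z m hz hm (by omega)) ?_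
  convert hR using 1
  rw [Fin.ext_iff, val_cyc _ _ _ hzm.le]
  split_ifs <;> omega

theorem eq_le (hn : 3 ≤ n) (G : Subgroup (Perm (Fin n))) (z o m : Fin n)
    (hz : z.val = 0) (ho : o.val = 1) (hm : m.val + 1 = n)
    (hs1 : Fin.cycleIcc z m ∈ G) (ht1 : swap z o * Fin.cycleIcc z m * (swap z o)⁻¹ ∈ G) :
    alternatingGroup (Fin n) ≤ G := by
  have hzm : z < m := by rw [Fin.lt_def]; omega
  have hD := G.mul_mem (G.inv_mem hs1) ht1
  have e : (Fin.cycleIcc z m)⁻¹ * (swap z o * Fin.cycleIcc z m * (swap z o)⁻¹) =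
      swap z m * swap z o := by
    rw [inv_mul_eq_iff_eq_mul, swap_inv, ← mul_assoc]
    congr 1
    ext x
    have := x.2
    simp only [Perm.mul_apply, val_cyc _ _ _ hzm.le, val_swap, hz, ho]
    grind
  rw [e] at hD
  have hR := (mr_of (by rw [Ne, Fin.ext_iff]; omega) (by rw [Ne, Fin.ext_iff]; omega)
          (by rw [Ne, Fin.ext_iff]; omega) hD).2.1
  refine finishB (b := z) hs1 (Fin.isCycle_cycleIcc hzm) (full_moves z m hz hm (by omega)) ?_
  convert hR using 1
  rw [Fin.ext_iff, val_cyc _ _ _ hzm.le]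
  split_ifs <;> omega

theorem stmt14_aux (l₁ l₂ n : ℕ) (h₁ : 3 ≤ l₁) (h₂ : 3 ≤ l₂)
    (hodd₁ : Odd l₁) (hodd₂ : Odd l₂) (hle : l₂ ≤ l₁)
    (hn₁ : l₁ ≤ n) (hsum : n < l₁ + l₂) :
    ∃ σ₁ σ₂ : Equiv.Perm (Fin n),
      σ₁.IsCycle ∧ σ₂.IsCycle ∧
      orderOf σ₁ = l₁ ∧ orderOf σ₂ = l₂ ∧
      σ₁ ∈ alternatingGroup (Fin n) ∧ σ₂ ∈ alternatingGroup (Fin n) ∧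
      Subgroup.closure {σ₁, σ₂} = alternatingGroup (Fin n) := by
  have fin : ∀ σ₁ σ₂ : Equiv.Perm (Fin n), (σ₁.IsCycle ∧ orderOf σ₁ = l₁ ∧
      σ₁ ∈ alternatingGroup (Fin n)) → (σ₂.IsCycle ∧ orderOf σ₂ = l₂ ∧
      σ₂ ∈ alternatingGroup (Fin n)) → (∀ G : Subgroup (Equiv.Perm (Fin n)), σ₁ ∈ G → σ₂ ∈ G →
        alternatingGroup (Fin n) ≤ G) → ∃ σ₁ σ₂ : Equiv.Perm (Fin n),
      σ₁.IsCycle ∧ σ₂.IsCycle ∧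
      orderOf σ₁ = l₁ ∧ orderOf σ₂ = l₂ ∧
      σ₁ ∈ alternatingGroup (Fin n) ∧ σ₂ ∈ alternatingGroup (Fin n) ∧
      Subgroup.closure {σ₁, σ₂} = alternatingGroup (Fin n) := by
    rintro s t ⟨a1, a2, a3⟩ ⟨b1, b2, b3⟩ H
    refine ⟨s, t, a1, b1, a2, b2, a3, b3, le_antisymm ?_ ?_⟩
    · rw [Subgroup.closure_le]
      rintro x (rfl | rfl)
      · exact a3
      · exact b3
    · exact H _ (Subgroup.subset_closure (by simp)) (Subgroup.subset_closure (by simp))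
  let z : Fin n := ⟨0, by omega⟩
  let j : Fin n := ⟨l₁ - 1, by omega⟩
  let i : Fin n := ⟨n - l₂, by omega⟩
  let m : Fin n := ⟨n - 1, by omega⟩
  let o : Fin n := ⟨1, by omega⟩
  have hz : z.val = 0 := rfl
  have hj : j.val + 1 = l₁ := Nat.sub_add_cancel (by omega)
  have hi : i.val + l₂ = n := Nat.sub_add_cancel (by omega)
  have hm : m.val + 1 = n := Nat.sub_add_cancel (by omega)
  have ho : o.val = 1 := rfl
  have f1 := cyc_facts z j l₁ (by omega) h₁ hodd₁
  have f2 := cyc_facts i m l₂ (by omega) h₂ hodd₂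
  rcases hn₁.lt_or_eq with hlt | heq
  · exact fin _ _ f1 f2 fun G hs ht =>
      interval_le l₁ l₂ h₂ hle hodd₁ hodd₂ hlt hsum G z j i m hz hj hi hm hs ht
  have hjm : j = m := by rw [Fin.ext_iff]; omega
  rw [hjm] at f1
  rcases hle.lt_or_eq with hlt | heq2
  · exact fin _ _ f1 f2 fun G hs ht =>
      full_le l₂ h₂ (by omega) G z i m hz hi hm hs ht
  · refine fin _ (swap z o * Fin.cycleIcc z m * (swap z o)⁻¹) f1 ⟨f1.1.conj, ?_, ?_⟩
      fun G hs ht => eq_le (by omega) G z o m hz ho hm hs ht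
    · rw [heq2, ← f1.2.1, ← MulAut.conj_apply]
      exact orderOf_injective (MulAut.conj (swap z o)).toMonoidHom (MulAut.conj _).injective _
    · exact (alternatingGroup.normal).conj_mem _ f1.2.2 _
end

/-- Miller's theorem: for odd integers `ℓ₁, ℓ₂ ≥ 3` and `n` with
`ℓ₁, ℓ₂ ≤ n < ℓ₁ + ℓ₂`, there are cycles `σ₁, σ₂` in the alternating group on
`n` symbols of orders `ℓ₁` and `ℓ₂` which generate the alternating group. -/
theorem stmt14 (l₁ l₂ n : ℕ) (h₁ : 3 ≤ l₁) (h₂ : 3 ≤ l₂)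
    (hodd₁ : Odd l₁) (hodd₂ : Odd l₂)
    (hn₁ : l₁ ≤ n) (hn₂ : l₂ ≤ n) (hsum : n < l₁ + l₂) :
    ∃ σ₁ σ₂ : Equiv.Perm (Fin n),
      σ₁.IsCycle ∧ σ₂.IsCycle ∧
      orderOf σ₁ = l₁ ∧ orderOf σ₂ = l₂ ∧
      σ₁ ∈ alternatingGroup (Fin n) ∧ σ₂ ∈ alternatingGroup (Fin n) ∧
      Subgroup.closure {σ₁, σ₂} = alternatingGroup (Fin n) := by
  rcases le_total l₂ l₁ with h | h
  · exact stmt14_aux l₁ l₂ n h₁ h₂ hodd₁ hodd₂ h hn₁ hsum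
  · obtain ⟨s, t, a, b, c, d, e, f, g⟩ :=
      stmt14_aux l₂ l₁ n h₂ h₁ hodd₂ hodd₁ h hn₂ (by omega)
    exact ⟨t, s, b, a, d, c, f, e, by rw [Set.pair_comm]; exact g⟩
end

section
/- Let V and Y be sets and let A be a subgroup of the group of bijections of Y containing some element b ≠ id. For a bijection s of V and a function f : V → A, let w(s, f) denote the bijection of V × Y given by w(s, f)(v, y) = (s(v), f(s(v))(y)). Fix bijections h₁ and g₁ of V and a function g₂ : V → A. If w(g₁, g₂) ∘ w(h₁, f) = w(h₁, f) ∘ w(g₁, g₂) for every function f : V → A, then g₁ is the identity bijection of V. -/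
/-- The wreath-product action: for a bijection `s` of `V` and `f : V → A` with
`A` a subgroup of the bijections of `Y`, the bijection `w s f` of `V × Y` is
given by `w s f (v, y) = (s v, f (s v) y)`. -/
def wrAct {V Y : Type*} (A : Subgroup (Equiv.Perm Y)) (s : Equiv.Perm V) (f : V → A) :
    Equiv.Perm (V × Y) where
  toFun q := (s q.1, (f (s q.1) : Equiv.Perm Y) q.2)
  invFun q := (s.symm q.1, ((f q.1 : Equiv.Perm Y)).symm q.2)
  left_inv q := by simp
  right_inv q := by simp

/-- If `A` contains an element `b ≠ 1`, and the wreath-product element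
`w g₁ g₂` commutes with `w h₁ f` for every function `f : V → A`, then `g₁` is
the identity bijection of `V`. -/
theorem stmt15 {V Y : Type*} (A : Subgroup (Equiv.Perm Y)) (b : A) (hb : b ≠ 1)
    (h₁ g₁ : Equiv.Perm V) (g₂ : V → A)
    (hcomm : ∀ f : V → A, wrAct A g₁ g₂ * wrAct A h₁ f = wrAct A h₁ f * wrAct A g₁ g₂) :
    g₁ = 1 := by
  classical
  ext u
  by_contra hu
  simp only [Equiv.Perm.coe_one, id_eq] at hu
  apply hb
  have key : ∀ (f : V → A) (y : Y),
      (g₂ (g₁ u) : Equiv.Perm Y) ((f u : Equiv.Perm Y) y)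
        = (f (g₁ u) : Equiv.Perm Y) ((g₂ (g₁ (h₁.symm u)) : Equiv.Perm Y) y) := by
    intro f y
    have h := DFunLike.congr_fun (hcomm f) (h₁.symm u, y)
    simp only [Equiv.Perm.mul_apply, wrAct, Equiv.coe_fn_mk, Equiv.apply_symm_apply,
      Prod.mk.injEq] at h
    rw [← h.1] at h
    exact h.2
  apply Subtype.ext
  ext y
  have h1 := key (fun _ => 1) y
  have h2 := key (Function.update (fun _ => 1) u b) y
  rw [Function.update_self, Function.update_of_ne hu] at h2
  rw [← h1] at h2
  exact (g₂ (g₁ u) : Equiv.Perm Y).injective h2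
end
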